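/- arXiv:1508.04337 — 2 statements merged into one kernel-verified Lean document; each statement's English description precedes it below -/
import Mathlib

section
/- Let (u,τ) be a classical solution of the p-system on ℝ×[0,T) (T a finite positive constant or infinity), with the solution twice continuously differentiable so that α and β are C¹. Assume that at t=0 the functions u(·,0), τ(·,0)>0, ρ(·,0)=1/τ(·,0), α(·,0), β(·,0) are all uniformly bounded, and let M be a constant with α(x,0) < M and β(x,0) < M for all x ∈ ℝ. Then α(x,t) < M and β(x,t) < M for all (x,t) ∈ ℝ×[0,T). -/
open Real Set MeasureTheory

noncomputable section

/-- Partial derivative in the spatial variable `x`. -/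
def pdx (f : ℝ → ℝ → ℝ) (x t : ℝ) : ℝ := deriv (fun y => f y t) x

/-- Partial derivative in the time variable `t`. -/
def pdt (f : ℝ → ℝ → ℝ) (x t : ℝ) : ℝ := deriv (fun s => f x s) t

/-- The time strip `ℝ × [0, T)`, where `T` is a real number or `+∞`. -/
def strip (T : EReal) : Set (ℝ × ℝ) := {p : ℝ × ℝ | 0 ≤ p.2 ∧ (p.2 : EReal) < T}

/-- `η = (2√(Kγ)/(γ−1)) τ^{−(γ−1)/2}`. -/
def etaP (K γ : ℝ) (τ : ℝ → ℝ → ℝ) (x t : ℝ) : ℝ :=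
  2 * Real.sqrt (K * γ) / (γ - 1) * τ x t ^ (-(γ - 1) / 2)

/-- Gradient variable `α = s_x = u_x + η_x` for the p-system. -/
def alphaP (K γ : ℝ) (u τ : ℝ → ℝ → ℝ) (x t : ℝ) : ℝ :=
  pdx u x t + pdx (etaP K γ τ) x t

/-- Gradient variable `β = r_x = u_x − η_x` for the p-system. -/
def betaP (K γ : ℝ) (u τ : ℝ → ℝ → ℝ) (x t : ℝ) : ℝ :=
  pdx u x t - pdx (etaP K γ τ) x t

/-- The p-system `τ_t − u_x = 0`, `u_t + p_x = 0` with `p = K τ^{−γ}`, at the point `(x,t)`. -/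
def pSystem (K γ : ℝ) (u τ : ℝ → ℝ → ℝ) (x t : ℝ) : Prop :=
  pdt τ x t - pdx u x t = 0 ∧
  pdt u x t + pdx (fun y s => K * τ y s ^ (-γ)) x t = 0

/-- Riemann invariant `s = u + η`. -/
def sRi (K γ : ℝ) (u τ : ℝ → ℝ → ℝ) (x t : ℝ) : ℝ := u x t + etaP K γ τ x t

/-- Riemann invariant `r = u − η`. -/
def rRi (K γ : ℝ) (u τ : ℝ → ℝ → ℝ) (x t : ℝ) : ℝ := u x t - etaP K γ τ x t

/-- The Lagrangian wave speed `c = √(Kγ) τ^{−(γ+1)/2}`. -/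
def cP (K γ : ℝ) (τ : ℝ → ℝ → ℝ) (x t : ℝ) : ℝ :=
  Real.sqrt (K * γ) * τ x t ^ (-(γ + 1) / 2)

/-- The constant `K_τ = (2√(Kγ)/(γ−1))^{2/(γ−1)}`. -/
def KtauC (K γ : ℝ) : ℝ := (2 * Real.sqrt (K * γ) / (γ - 1)) ^ (2 / (γ - 1))

/-- The constant `K_c = √(Kγ) K_τ^{−(γ+1)/2}`. -/
def KcC (K γ : ℝ) : ℝ := Real.sqrt (K * γ) * KtauC K γ ^ (-(γ + 1) / 2)

/-- `k₁ = ((γ+1)K_c/(2(γ−1))) η^{2/(γ−1)}`. -/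
def k1P (K γ : ℝ) (τ : ℝ → ℝ → ℝ) (x t : ℝ) : ℝ :=
  (γ + 1) * KcC K γ / (2 * (γ - 1)) * etaP K γ τ x t ^ (2 / (γ - 1))

open Filter Topology

/-! ### A comparison principle on backward cones -/

/-- The backward cone of slope `c` with apex `(x₀, t₀)`, truncated at time `0`. -/
def backwardCone (c x₀ t₀ : ℝ) : Set (ℝ × ℝ) :=
  {p | 0 ≤ p.2 ∧ p.2 ≤ t₀ ∧ |p.1 - x₀| ≤ c * (t₀ - p.2)}

lemma isCompact_backwardCone (c x₀ t₀ : ℝ) : IsCompact (backwardCone c x₀ t₀) := by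
  have hclosed : IsClosed (backwardCone c x₀ t₀) := by
    simp only [backwardCone, ofPred_and]
    exact (isClosed_le continuous_const continuous_snd).inter
      ((isClosed_le continuous_snd continuous_const).inter
        (isClosed_le (by fun_prop) (by fun_prop)))
  refine ((isCompact_Icc (a := x₀ - |c| * t₀) (b := x₀ + |c| * t₀)).prod
    (isCompact_Icc (a := (0 : ℝ)) (b := t₀))).of_isClosed_subset hclosed ?_
  rintro ⟨x, t⟩ ⟨h0, h1, h2⟩
  simp only at h0 h1 h2
  have h3 : c * (t₀ - t) ≤ |c| * t₀ :=
    (mul_le_mul_of_nonneg_right (le_abs_self c) (by linarith)).trans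
      (mul_le_mul_of_nonneg_left (by linarith) (abs_nonneg c))
  have h4 := abs_le.1 (h2.trans h3)
  exact ⟨⟨by linarith, by linarith⟩, h0, h1⟩

lemma eventually_mem_backwardCone {c x₀ t₀ v : ℝ} {p : ℝ × ℝ}
    (hp : p ∈ backwardCone c x₀ t₀) (hpt : 0 < p.2) (hv : |v| ≤ c) :
    ∀ᶠ h in 𝓝[>] (0 : ℝ), p - h • ((v, 1) : ℝ × ℝ) ∈ backwardCone c x₀ t₀ := by
  filter_upwards [Ioo_mem_nhdsGT hpt] with h hh
  obtain ⟨h0, h1, h2⟩ := hp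
  refine ⟨by simp; linarith [hh.2], by simp; linarith [hh.1], ?_⟩
  have h3 : |h * v| ≤ h * c := by
    rw [abs_mul, abs_of_pos hh.1]
    exact mul_le_mul_of_nonneg_left hv hh.1.le
  have h4 := abs_le.1 h2
  have h5 := abs_le.1 h3
  simp only [Prod.fst_sub, Prod.snd_sub, Prod.smul_fst, Prod.smul_snd, smul_eq_mul, mul_one]
  rw [abs_le]
  constructor <;> nlinarith

/-- A function negative on the earlier part of a backward cone is nonpositive at a point. -/
lemma nonpos_of_neg_of_earlier {c x₀ t₀ : ℝ} (hc : 0 ≤ c) {f : ℝ × ℝ → ℝ} {p : ℝ × ℝ}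
    (hf : ContinuousOn f (backwardCone c x₀ t₀)) (hp : p ∈ backwardCone c x₀ t₀) (hpt : 0 < p.2)
    (hneg : ∀ q ∈ backwardCone c x₀ t₀, q.2 < p.2 → f q < 0) : f p ≤ 0 := by
  have hmem := eventually_mem_backwardCone (v := 0) hp hpt (by simpa using hc)
  have hpath : Tendsto (fun h : ℝ => p - h • ((0, 1) : ℝ × ℝ)) (𝓝[>] 0)
      (𝓝[backwardCone c x₀ t₀] p) := by
    refine tendsto_nhdsWithin_iff.2 ⟨?_, hmem⟩
    have : Continuous (fun h : ℝ => p - h • ((0, 1) : ℝ × ℝ)) := by fun_prop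
    simpa using (this.tendsto 0).mono_left nhdsWithin_le_nhds
  refine le_of_tendsto ((hf p hp).tendsto.comp hpath) ?_
  filter_upwards [hmem, self_mem_nhdsWithin] with h hh hpos
  exact (hneg _ hh (by simpa using hpos)).le

/-- A function negative on the earlier part of a backward cone and vanishing at a point cannot
decrease there along an admissible direction. -/
lemma deriv_nonneg_of_neg_of_earlier {c x₀ t₀ v : ℝ} {f : ℝ × ℝ → ℝ} {p : ℝ × ℝ}
    {f' : ℝ × ℝ →L[ℝ] ℝ} (hp : p ∈ backwardCone c x₀ t₀) (hpt : 0 < p.2)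
    (hneg : ∀ q ∈ backwardCone c x₀ t₀, q.2 < p.2 → f q < 0) (hfp : f p = 0)
    (hv : |v| ≤ c) (hf : HasFDerivAt f f' p) : 0 ≤ f' (v, 1) := by
  have hpath : HasDerivAt (fun h : ℝ => p - h • ((v, 1) : ℝ × ℝ)) (-((v, 1) : ℝ × ℝ)) 0 := by
    simpa using ((hasDerivAt_id (0 : ℝ)).smul_const ((v, 1) : ℝ × ℝ)).const_sub p
  have hcomp : HasDerivAt (fun h : ℝ => f (p - h • ((v, 1) : ℝ × ℝ))) (f' (-(v, 1))) 0 :=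
    HasFDerivAt.comp_hasDerivAt (l := f) (0 : ℝ) (by simpa using hf) hpath
  have hslope := (hasDerivAt_iff_tendsto_slope.1 hcomp).mono_left
    (nhdsWithin_mono (0 : ℝ) (fun h (hh : h ∈ Ioi (0 : ℝ)) => (ne_of_gt hh : h ≠ 0)))
  have hle : f' (-(v, 1)) ≤ 0 := by
    refine le_of_tendsto hslope ?_
    filter_upwards [eventually_mem_backwardCone hp hpt hv, self_mem_nhdsWithin] with h hh hpos
    have hpos' : (0 : ℝ) < h := hpos
    have := hneg _ hh (by simpa using hpos')
    rw [slope_def_field]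
    simp only [zero_smul, sub_zero, hfp]
    exact div_nonpos_of_nonpos_of_nonneg this.le hpos'.le
  rw [map_neg] at hle
  linarith

/-- Comparison principle for two functions on a backward cone: if both are negative initially and
each has a negative derivative along an admissible direction whenever it vanishes while the other
is nonpositive, then both stay negative. -/
lemma neg_on_backwardCone {c x₀ t₀ : ℝ} (hc : 0 ≤ c) {f g : ℝ × ℝ → ℝ}
    (hf : ContinuousOn f (backwardCone c x₀ t₀)) (hg : ContinuousOn g (backwardCone c x₀ t₀))
    (hinit : ∀ p ∈ backwardCone c x₀ t₀, p.2 = 0 → f p < 0 ∧ g p < 0)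
    (hfd : ∀ p ∈ backwardCone c x₀ t₀, 0 < p.2 → f p = 0 → g p ≤ 0 →
      ∃ (v : ℝ) (f' : ℝ × ℝ →L[ℝ] ℝ), |v| ≤ c ∧ HasFDerivAt f f' p ∧ f' (v, 1) < 0)
    (hgd : ∀ p ∈ backwardCone c x₀ t₀, 0 < p.2 → g p = 0 → f p ≤ 0 →
      ∃ (v : ℝ) (g' : ℝ × ℝ →L[ℝ] ℝ), |v| ≤ c ∧ HasFDerivAt g g' p ∧ g' (v, 1) < 0) :
    ∀ p ∈ backwardCone c x₀ t₀, f p < 0 ∧ g p < 0 := by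
  by_contra! hcon
  obtain ⟨q, hqD, hq⟩ := hcon
  set D := backwardCone c x₀ t₀
  have hcomp : IsCompact (D ∩ (fun p => max (f p) (g p)) ⁻¹' Ici 0) :=
    (isCompact_backwardCone c x₀ t₀).of_isClosed_subset
      ((hf.sup hg).preimage_isClosed_of_isClosed
        (isCompact_backwardCone c x₀ t₀).isClosed isClosed_Ici) inter_subset_left
  have hne : (D ∩ (fun p => max (f p) (g p)) ⁻¹' Ici 0).Nonempty := by
    refine ⟨q, hqD, ?_⟩
    rcases lt_or_ge (f q) 0 with h | h
    · exact le_max_of_le_right (hq h)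
    · exact le_max_of_le_left h
  obtain ⟨p, ⟨hpD, hp⟩, hmin⟩ := hcomp.exists_isMinOn hne continuous_snd.continuousOn
  have hearlier : ∀ q ∈ D, q.2 < p.2 → f q < 0 ∧ g q < 0 := by
    intro q hq hlt
    by_contra hnot
    have hqm : (0 : ℝ) ≤ max (f q) (g q) := by
      by_contra hneg
      exact hnot (max_lt_iff.1 (not_le.1 hneg))
    exact absurd (hmin ⟨hq, hqm⟩) (not_le.2 hlt)
  have hpt : 0 < p.2 := by
    refine lt_of_le_of_ne hpD.1 fun h => ?_
    have := hinit p hpD h.symm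
    exact absurd hp (not_le.2 (max_lt this.1 this.2))
  have hfp := nonpos_of_neg_of_earlier hc hf hpD hpt fun q hq h => (hearlier q hq h).1
  have hgp := nonpos_of_neg_of_earlier hc hg hpD hpt fun q hq h => (hearlier q hq h).2
  rcases le_max_iff.1 (show (0 : ℝ) ≤ max (f p) (g p) from hp) with h | h
  · obtain ⟨v, f', hv, hf', hlt⟩ := hfd p hpD hpt (le_antisymm hfp h) hgp
    exact absurd (deriv_nonneg_of_neg_of_earlier hpD hpt (fun q hq h => (hearlier q hq h).1)
      (le_antisymm hfp h) hv hf') (not_le.2 hlt)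
  · obtain ⟨v, g', hv, hg', hlt⟩ := hgd p hpD hpt (le_antisymm hgp h) hfp
    exact absurd (deriv_nonneg_of_neg_of_earlier hpD hpt (fun q hq h => (hearlier q hq h).2)
      (le_antisymm hgp h) hv hg') (not_le.2 hlt)

/-! ### Partial derivatives on the strip -/

lemma strip_mem_nhds {T : EReal} {p : ℝ × ℝ} (hp : p ∈ strip T) (hpt : 0 < p.2) :
    strip T ∈ 𝓝 p := by
  have h1 : ∀ᶠ q : ℝ × ℝ in 𝓝 p, 0 < q.2 := continuous_snd.continuousAt.eventually_const_lt hpt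
  have h2 : ∀ᶠ q : ℝ × ℝ in 𝓝 p, (q.2 : EReal) < T :=
    (continuous_coe_real_ereal.comp continuous_snd).continuousAt.eventually_lt_const hp.2
  filter_upwards [h1, h2] with q hq1 hq2 using ⟨hq1.le, hq2⟩

lemma convex_strip (T : EReal) : Convex ℝ (strip T) := by
  have hord : OrdConnected {t : ℝ | 0 ≤ t ∧ (t : EReal) < T} :=
    ⟨fun a ha b hb t ht => ⟨ha.1.trans ht.1, (EReal.coe_le_coe_iff.2 ht.2).trans_lt hb.2⟩⟩
  exact hord.convex.linear_preimage (LinearMap.snd ℝ ℝ ℝ)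

lemma uniqueDiffOn_strip {T : EReal} (hT : 0 < T) : UniqueDiffOn ℝ (strip T) := by
  refine uniqueDiffOn_convex (convex_strip T) ?_
  obtain ⟨t, h0, h1⟩ := EReal.lt_iff_exists_real_btwn.1 hT
  have h0' : (0 : ℝ) < t := by exact_mod_cast h0
  exact ⟨(0, t), mem_interior_iff_mem_nhds.2 (strip_mem_nhds ⟨h0'.le, h1⟩ h0')⟩

lemma hasDerivAt_slice_fst {T : EReal} {f : ℝ → ℝ → ℝ} {f' : ℝ × ℝ →L[ℝ] ℝ} {p : ℝ × ℝ}
    (hp : p ∈ strip T) (hf : HasFDerivWithinAt (fun q : ℝ × ℝ => f q.1 q.2) f' (strip T) p) :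
    HasDerivAt (fun y => f y p.2) (f' (1, 0)) p.1 := by
  have hpath : HasDerivAt (fun y : ℝ => ((y, p.2) : ℝ × ℝ)) (1, 0) p.1 :=
    (hasDerivAt_id p.1).prodMk (hasDerivAt_const p.1 p.2)
  exact HasFDerivWithinAt.comp_hasDerivAt (l := fun q : ℝ × ℝ => f q.1 q.2) p.1 hf hpath
    (Eventually.of_forall fun _ => show _ ∈ strip T from ⟨hp.1, hp.2⟩)

lemma pdx_eq_of_hasFDerivAt {f : ℝ → ℝ → ℝ} {f' : ℝ × ℝ →L[ℝ] ℝ} {p : ℝ × ℝ}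
    (hf : HasFDerivAt (fun q : ℝ × ℝ => f q.1 q.2) f' p) : pdx f p.1 p.2 = f' (1, 0) := by
  have hpath : HasDerivAt (fun y : ℝ => ((y, p.2) : ℝ × ℝ)) (1, 0) p.1 :=
    (hasDerivAt_id p.1).prodMk (hasDerivAt_const p.1 p.2)
  exact (HasFDerivAt.comp_hasDerivAt (l := fun q : ℝ × ℝ => f q.1 q.2) p.1 hf hpath).deriv

lemma pdt_eq_of_hasFDerivAt {f : ℝ → ℝ → ℝ} {f' : ℝ × ℝ →L[ℝ] ℝ} {p : ℝ × ℝ}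
    (hf : HasFDerivAt (fun q : ℝ × ℝ => f q.1 q.2) f' p) : pdt f p.1 p.2 = f' (0, 1) := by
  have hpath : HasDerivAt (fun s : ℝ => ((p.1, s) : ℝ × ℝ)) (0, 1) p.2 :=
    (hasDerivAt_const p.2 p.1).prodMk (hasDerivAt_id p.2)
  exact (HasFDerivAt.comp_hasDerivAt (l := fun q : ℝ × ℝ => f q.1 q.2) p.2 hf hpath).deriv

lemma continuousOn_pdx {T : EReal} (hT : 0 < T) {f : ℝ → ℝ → ℝ}
    (hf : ContDiffOn ℝ 2 (fun q : ℝ × ℝ => f q.1 q.2) (strip T)) :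
    ContinuousOn (fun q : ℝ × ℝ => pdx f q.1 q.2) (strip T) := by
  have h := (hf.continuousOn_fderivWithin (uniqueDiffOn_strip hT) (by norm_num)).clm_apply
    (continuousOn_const (c := ((1, 0) : ℝ × ℝ)))
  refine h.congr fun q hq => ?_
  exact (hasDerivAt_slice_fst hq
    ((hf.differentiableOn (by norm_num)) q hq).hasFDerivWithinAt).deriv

/-- Differentiating a transport equation `w_t + a w_x = 0` in `x`. -/
lemma hasFDerivAt_grad_of_transport {w a : ℝ × ℝ → ℝ} {p : ℝ × ℝ} {a' : ℝ × ℝ →L[ℝ] ℝ}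
    (hw : ContDiffAt ℝ 2 w p) (ha : HasFDerivAt a a' p)
    (hpde : ∀ᶠ q in 𝓝 p, fderiv ℝ w q (0, 1) + a q * fderiv ℝ w q (1, 0) = 0) :
    ∃ G' : ℝ × ℝ →L[ℝ] ℝ, HasFDerivAt (fun q => fderiv ℝ w q (1, 0)) G' p ∧
      G' (a p, 1) = -(a' (1, 0) * fderiv ℝ w p (1, 0)) := by
  have hdiff : HasFDerivAt (fderiv ℝ w) (fderiv ℝ (fderiv ℝ w) p) p :=
    ((hw.fderiv_right (m := 1) (by norm_num)).differentiableAt (by norm_num)).hasFDerivAt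
  have hsymm := (hw.isSymmSndFDerivAt (by simp)).eq (1, 0) (0, 1)
  set H := fderiv ℝ (fderiv ℝ w) p
  have happ (v : ℝ × ℝ) : HasFDerivAt (fun q => fderiv ℝ w q v) (H.flip v) p := by
    simpa using hdiff.clm_apply (hasFDerivAt_const v p)
  have hzero := ((happ (0, 1)).add (ha.mul (happ (1, 0)))).unique
    ((hasFDerivAt_const (0 : ℝ) p).congr_of_eventuallyEq hpde)
  have hx := DFunLike.congr_fun hzero ((1, 0) : ℝ × ℝ)
  refine ⟨H.flip (1, 0), happ _, ?_⟩
  have hdir : ((a p, 1) : ℝ × ℝ) = a p • ((1, 0) : ℝ × ℝ) + (0, 1) := by simp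
  rw [hdir, map_add, map_smul]
  simp only [add_apply, smul_apply,
    ContinuousLinearMap.flip_apply, zero_apply, smul_eq_mul] at hx ⊢
  rw [← hsymm]
  linarith

/-! ### Riemann invariants of the p-system -/

/-- The Riemann invariant `u + σ η`; `σ = 1` gives `s` and `σ = -1` gives `r`. -/
def riemannInv (K γ σ : ℝ) (u τ : ℝ → ℝ → ℝ) (q : ℝ × ℝ) : ℝ :=
  u q.1 q.2 + σ * etaP K γ τ q.1 q.2

/-- The gradient variable `u_x + σ η_x`; `σ = 1` gives `α` and `σ = -1` gives `β`. -/
def riemannGrad (K γ σ : ℝ) (u τ : ℝ → ℝ → ℝ) (q : ℝ × ℝ) : ℝ :=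
  pdx u q.1 q.2 + σ * pdx (etaP K γ τ) q.1 q.2

lemma hasFDerivAt_etaP {K γ : ℝ} (hγ : 1 < γ) {τ : ℝ → ℝ → ℝ} {p : ℝ × ℝ}
    {τ' : ℝ × ℝ →L[ℝ] ℝ} (hpos : 0 < τ p.1 p.2)
    (hτ : HasFDerivAt (fun q : ℝ × ℝ => τ q.1 q.2) τ' p) :
    HasFDerivAt (fun q : ℝ × ℝ => etaP K γ τ q.1 q.2) (-(cP K γ τ p.1 p.2) • τ') p := by
  have h := (hτ.rpow_const (p := -(γ - 1) / 2) (Or.inl hpos.ne')).const_mul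
    (2 * Real.sqrt (K * γ) / (γ - 1))
  have hexp : -(γ - 1) / 2 - 1 = -(γ + 1) / 2 := by ring
  have hne : γ - 1 ≠ 0 := by linarith
  refine h.congr_fderiv ?_
  rw [smul_smul, hexp, cP]
  congr 1
  field_simp

lemma hasFDerivAt_cP {K γ : ℝ} {τ : ℝ → ℝ → ℝ} {p : ℝ × ℝ}
    {τ' : ℝ × ℝ →L[ℝ] ℝ} (hpos : 0 < τ p.1 p.2)
    (hτ : HasFDerivAt (fun q : ℝ × ℝ => τ q.1 q.2) τ' p) :
    HasFDerivAt (fun q : ℝ × ℝ => cP K γ τ q.1 q.2)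
      ((-(γ + 1) / 2 * (cP K γ τ p.1 p.2 / τ p.1 p.2)) • τ') p := by
  have h := (hτ.rpow_const (p := -(γ + 1) / 2) (Or.inl hpos.ne')).const_mul
    (Real.sqrt (K * γ))
  refine h.congr_fderiv ?_
  rw [smul_smul, rpow_sub_one hpos.ne', cP]
  congr 1
  ring

lemma hasFDerivAt_pressure {K γ : ℝ} (hK : 0 < K) (hγ : 1 < γ) {τ : ℝ → ℝ → ℝ} {p : ℝ × ℝ}
    {τ' : ℝ × ℝ →L[ℝ] ℝ} (hpos : 0 < τ p.1 p.2)
    (hτ : HasFDerivAt (fun q : ℝ × ℝ => τ q.1 q.2) τ' p) :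
    HasFDerivAt (fun q : ℝ × ℝ => K * τ q.1 q.2 ^ (-γ)) (-(cP K γ τ p.1 p.2) ^ 2 • τ') p := by
  have h := (hτ.rpow_const (p := -γ) (Or.inl hpos.ne')).const_mul K
  have hsq : cP K γ τ p.1 p.2 ^ 2 = K * γ * τ p.1 p.2 ^ (-γ - 1) := by
    rw [cP, mul_pow, Real.sq_sqrt (by positivity), ← Real.rpow_mul_natCast hpos.le]
    congr 2
    push_cast
    ring
  refine h.congr_fderiv ?_
  rw [smul_smul, hsq]
  congr 1
  ring

lemma cP_nonneg {K γ : ℝ} {τ : ℝ → ℝ → ℝ} {x t : ℝ} (hpos : 0 < τ x t) : 0 ≤ cP K γ τ x t :=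
  mul_nonneg (Real.sqrt_nonneg _) (Real.rpow_nonneg hpos.le _)

lemma etaP_pos {K γ : ℝ} (hK : 0 < K) (hγ : 1 < γ) {τ : ℝ → ℝ → ℝ} {x t : ℝ}
    (hpos : 0 < τ x t) : 0 < etaP K γ τ x t := by
  have : 0 < γ - 1 := by linarith
  unfold etaP
  positivity

/-- An upper bound on `η` gives an upper bound on the wave speed. -/
lemma cP_le_of_etaP_le {K γ E : ℝ} (hK : 0 < K) (hγ : 1 < γ) {τ : ℝ → ℝ → ℝ} {x t : ℝ}
    (hpos : 0 < τ x t) (hE : etaP K γ τ x t ≤ E) :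
    cP K γ τ x t ≤ Real.sqrt (K * γ) *
      (E / (2 * Real.sqrt (K * γ) / (γ - 1))) ^ ((γ + 1) / (γ - 1)) := by
  have hγ' : 0 < γ - 1 := by linarith
  have ha : 0 < 2 * Real.sqrt (K * γ) / (γ - 1) := by positivity
  have h1 : τ x t ^ (-(γ - 1) / 2) ≤ E / (2 * Real.sqrt (K * γ) / (γ - 1)) := by
    rw [le_div_iff₀ ha, mul_comm]
    exact hE
  have h2 : τ x t ^ (-(γ + 1) / 2) = (τ x t ^ (-(γ - 1) / 2)) ^ ((γ + 1) / (γ - 1)) := by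
    rw [← Real.rpow_mul hpos.le]
    congr 1
    field_simp
  unfold cP
  rw [h2]
  gcongr

lemma etaP_le_of_inv_le {K γ C : ℝ} (hγ : 1 < γ) {τ : ℝ → ℝ → ℝ} {x t : ℝ}
    (hpos : 0 < τ x t) (hC : 1 / τ x t ≤ C) :
    etaP K γ τ x t ≤ 2 * Real.sqrt (K * γ) / (γ - 1) * C ^ ((γ - 1) / 2) := by
  have hγ' : 0 < γ - 1 := by linarith
  have h : τ x t ^ (-(γ - 1) / 2) = (1 / τ x t) ^ ((γ - 1) / 2) := by
    rw [one_div, Real.inv_rpow hpos.le, ← Real.rpow_neg hpos.le]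
    congr 1
    ring
  unfold etaP
  rw [h]
  gcongr

section

variable {K γ : ℝ} {T : EReal} {u τ : ℝ → ℝ → ℝ}

lemma contDiffOn_etaP (hτ_reg : ContDiffOn ℝ 2 (fun p : ℝ × ℝ => τ p.1 p.2) (strip T))
    (hτ_pos : ∀ x t : ℝ, 0 ≤ t → (t : EReal) < T → 0 < τ x t) :
    ContDiffOn ℝ 2 (fun q : ℝ × ℝ => etaP K γ τ q.1 q.2) (strip T) :=
  contDiffOn_const.mul
    (hτ_reg.rpow_const_of_ne fun q hq => (hτ_pos q.1 q.2 hq.1 hq.2).ne')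

lemma contDiffOn_riemannInv (σ : ℝ)
    (hu_reg : ContDiffOn ℝ 2 (fun p : ℝ × ℝ => u p.1 p.2) (strip T))
    (hτ_reg : ContDiffOn ℝ 2 (fun p : ℝ × ℝ => τ p.1 p.2) (strip T))
    (hτ_pos : ∀ x t : ℝ, 0 ≤ t → (t : EReal) < T → 0 < τ x t) :
    ContDiffOn ℝ 2 (riemannInv K γ σ u τ) (strip T) :=
  hu_reg.add (contDiffOn_const.mul (contDiffOn_etaP hτ_reg hτ_pos))

lemma continuousOn_riemannGrad (hT : 0 < T) (σ : ℝ)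
    (hu_reg : ContDiffOn ℝ 2 (fun p : ℝ × ℝ => u p.1 p.2) (strip T))
    (hτ_reg : ContDiffOn ℝ 2 (fun p : ℝ × ℝ => τ p.1 p.2) (strip T))
    (hτ_pos : ∀ x t : ℝ, 0 ≤ t → (t : EReal) < T → 0 < τ x t) :
    ContinuousOn (riemannGrad K γ σ u τ) (strip T) :=
  (continuousOn_pdx hT hu_reg).add
    (continuousOn_const.mul (continuousOn_pdx hT (contDiffOn_etaP hτ_reg hτ_pos)))

/-- The Riemann invariant `u + σ η` is transported with speed `σ c`. -/
lemma riemannInv_transport (hK : 0 < K) (hγ : 1 < γ) {σ : ℝ} (hσ : σ ^ 2 = 1)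
    (hu_reg : ContDiffOn ℝ 2 (fun p : ℝ × ℝ => u p.1 p.2) (strip T))
    (hτ_reg : ContDiffOn ℝ 2 (fun p : ℝ × ℝ => τ p.1 p.2) (strip T))
    (hτ_pos : ∀ x t : ℝ, 0 ≤ t → (t : EReal) < T → 0 < τ x t)
    (hpde : ∀ x t : ℝ, 0 ≤ t → (t : EReal) < T → pSystem K γ u τ x t)
    {p : ℝ × ℝ} (hp : p ∈ strip T) (hpt : 0 < p.2) :
    fderiv ℝ (riemannInv K γ σ u τ) p (0, 1) +
        σ * cP K γ τ p.1 p.2 * fderiv ℝ (riemannInv K γ σ u τ) p (1, 0) = 0 ∧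
      riemannGrad K γ σ u τ p = fderiv ℝ (riemannInv K γ σ u τ) p (1, 0) := by
  have hnhds := strip_mem_nhds hp hpt
  have hpos := hτ_pos p.1 p.2 hp.1 hp.2
  have hu := ((hu_reg.contDiffAt hnhds).differentiableAt (by norm_num)).hasFDerivAt
  have hτ := ((hτ_reg.contDiffAt hnhds).differentiableAt (by norm_num)).hasFDerivAt
  have hη := hasFDerivAt_etaP (K := K) hγ hpos hτ
  have hw : HasFDerivAt (riemannInv K γ σ u τ) _ p := hu.add (hη.const_mul σ)
  obtain ⟨h1, h2⟩ := hpde p.1 p.2 hp.1 hp.2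
  rw [pdt_eq_of_hasFDerivAt hτ, pdx_eq_of_hasFDerivAt hu] at h1
  rw [pdt_eq_of_hasFDerivAt hu,
    pdx_eq_of_hasFDerivAt (f := fun y s => K * τ y s ^ (-γ)) (hasFDerivAt_pressure hK hγ hpos hτ)]
    at h2
  rw [hw.fderiv, riemannGrad, pdx_eq_of_hasFDerivAt hu, pdx_eq_of_hasFDerivAt hη]
  simp only [add_apply, smul_apply, smul_eq_mul] at h1 h2 ⊢
  refine ⟨?_, trivial⟩
  linear_combination h2 - σ * cP K γ τ p.1 p.2 * h1 -
    cP K γ τ p.1 p.2 ^ 2 * fderiv ℝ (fun q : ℝ × ℝ => τ q.1 q.2) p (1, 0) * hσ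

/-- The Riccati-type equation for `u_x + σ η_x` along the characteristic of speed `σ c`. -/
lemma riemannGrad_riccati (hK : 0 < K) (hγ : 1 < γ) {σ : ℝ} (hσ : σ ^ 2 = 1)
    (hu_reg : ContDiffOn ℝ 2 (fun p : ℝ × ℝ => u p.1 p.2) (strip T))
    (hτ_reg : ContDiffOn ℝ 2 (fun p : ℝ × ℝ => τ p.1 p.2) (strip T))
    (hτ_pos : ∀ x t : ℝ, 0 ≤ t → (t : EReal) < T → 0 < τ x t)
    (hpde : ∀ x t : ℝ, 0 ≤ t → (t : EReal) < T → pSystem K γ u τ x t)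
    {p : ℝ × ℝ} (hp : p ∈ strip T) (hpt : 0 < p.2) :
    ∃ G' : ℝ × ℝ →L[ℝ] ℝ, HasFDerivAt (riemannGrad K γ σ u τ) G' p ∧
      G' (σ * cP K γ τ p.1 p.2, 1) = (γ + 1) / (4 * τ p.1 p.2) * riemannGrad K γ σ u τ p *
        (riemannGrad K γ (-σ) u τ p - riemannGrad K γ σ u τ p) := by
  have hnhds := strip_mem_nhds hp hpt
  have hpos := hτ_pos p.1 p.2 hp.1 hp.2
  have hτ := ((hτ_reg.contDiffAt hnhds).differentiableAt (by norm_num)).hasFDerivAt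
  have hη := hasFDerivAt_etaP (K := K) hγ hpos hτ
  have hev : ∀ᶠ q in 𝓝 p, q ∈ strip T ∧ 0 < q.2 :=
    (show ∀ᶠ q in 𝓝 p, q ∈ strip T from hnhds).and
      (continuous_snd.continuousAt.eventually_const_lt hpt)
  obtain ⟨G', hG', hval⟩ := hasFDerivAt_grad_of_transport
    ((contDiffOn_riemannInv (K := K) (γ := γ) σ hu_reg hτ_reg hτ_pos).contDiffAt hnhds)
    ((hasFDerivAt_cP (K := K) (γ := γ) hpos hτ).const_mul σ)
    (hev.mono fun q hq =>
      (riemannInv_transport hK hγ hσ hu_reg hτ_reg hτ_pos hpde hq.1 hq.2).1)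
  refine ⟨G', hG'.congr_of_eventuallyEq (hev.mono fun q hq =>
    (riemannInv_transport hK hγ hσ hu_reg hτ_reg hτ_pos hpde hq.1 hq.2).2), ?_⟩
  rw [hval, ← (riemannInv_transport hK hγ hσ hu_reg hτ_reg hτ_pos hpde hp hpt).2]
  have hdiff : riemannGrad K γ (-σ) u τ p - riemannGrad K γ σ u τ p =
      2 * σ * cP K γ τ p.1 p.2 * fderiv ℝ (fun q : ℝ × ℝ => τ q.1 q.2) p (1, 0) := by
    rw [riemannGrad, riemannGrad, pdx_eq_of_hasFDerivAt hη]
    simp only [smul_apply, smul_eq_mul]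
    ring
  rw [hdiff]
  simp only [smul_apply, smul_eq_mul]
  field_simp
  ring

end

lemma backwardCone_subset_strip {T : EReal} {c x₀ t₀ : ℝ} (ht₀ : (t₀ : EReal) < T) :
    backwardCone c x₀ t₀ ⊆ strip T :=
  fun _ hp => ⟨hp.1, (EReal.coe_le_coe_iff.2 hp.2.1).trans_lt ht₀⟩

/-- A bounded function cannot have derivative bounded above by a negative constant. -/
lemma nonneg_of_deriv_le_of_bounded {f : ℝ → ℝ} {C M : ℝ} (hf : Differentiable ℝ f)
    (hC : ∀ x, |f x| ≤ C) (hM : ∀ x, deriv f x ≤ M) : 0 ≤ M := by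
  by_contra! hneg
  have hC0 : 0 ≤ C := (abs_nonneg _).trans (hC 0)
  have hy : 0 ≤ (2 * C + 1) / (-M) := div_nonneg (by linarith) (by linarith)
  have h := image_sub_le_mul_sub_of_deriv_le hf hM hy
  have hval : M * ((2 * C + 1) / (-M) - 0) = -(2 * C + 1) := by
    have := hneg.ne
    field_simp
    ring
  rw [hval] at h
  have h1 := abs_le.1 (hC 0)
  have h2 := abs_le.1 (hC ((2 * C + 1) / (-M)))
  linarith

section

variable {K γ : ℝ} {T : EReal} {u τ : ℝ → ℝ → ℝ}

/-- Finite speed of propagation: every point of the strip is the apex of a backward cone whose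
slope dominates the wave speed inside it. -/
lemma exists_backwardCone_cP_le (hK : 0 < K) (hγ : 1 < γ)
    (hu_reg : ContDiffOn ℝ 2 (fun p : ℝ × ℝ => u p.1 p.2) (strip T))
    (hτ_reg : ContDiffOn ℝ 2 (fun p : ℝ × ℝ => τ p.1 p.2) (strip T))
    (hτ_pos : ∀ x t : ℝ, 0 ≤ t → (t : EReal) < T → 0 < τ x t)
    (hpde : ∀ x t : ℝ, 0 ≤ t → (t : EReal) < T → pSystem K γ u τ x t)
    {C : ℝ} (hu0 : ∀ x, |u x 0| ≤ C) (hρ0 : ∀ x, 1 / τ x 0 ≤ C)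
    {x₀ t₀ : ℝ} (ht₀ : 0 ≤ t₀) (ht₀T : (t₀ : EReal) < T) :
    ∃ c, 0 ≤ c ∧ ∀ p ∈ backwardCone c x₀ t₀, cP K γ τ p.1 p.2 ≤ c := by
  have hpos0 (x : ℝ) : 0 < τ x 0 :=
    hτ_pos x 0 le_rfl ((EReal.coe_le_coe_iff.2 ht₀).trans_lt ht₀T)
  set S : ℝ := C + 2 * Real.sqrt (K * γ) / (γ - 1) * C ^ ((γ - 1) / 2) + 1
  have hη0 (x : ℝ) : |u x 0| + etaP K γ τ x 0 < S := by
    linarith [hu0 x, etaP_le_of_inv_le (K := K) hγ (hpos0 x) (hρ0 x)]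
  set c : ℝ := Real.sqrt (K * γ) *
    ((S + t₀) / (2 * Real.sqrt (K * γ) / (γ - 1))) ^ ((γ + 1) / (γ - 1))
  have hS0 : 0 ≤ S := by
    linarith [hη0 0, abs_nonneg (u 0 0), etaP_pos hK hγ (hpos0 0)]
  have hc : 0 ≤ c := by
    have : 0 < γ - 1 := by linarith
    positivity
  have hsub : backwardCone c x₀ t₀ ⊆ strip T := backwardCone_subset_strip ht₀T
  have hreg (σ : ℝ) := contDiffOn_riemannInv (K := K) (γ := γ) σ hu_reg hτ_reg hτ_pos
  have hspeed : ∀ p ∈ backwardCone c x₀ t₀, riemannInv K γ 1 u τ p - S - p.2 ≤ 0 →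
      -riemannInv K γ (-1) u τ p - S - p.2 ≤ 0 → cP K γ τ p.1 p.2 ≤ c := by
    intro p hp h1 h2
    refine cP_le_of_etaP_le hK hγ (hτ_pos _ _ (hsub hp).1 (hsub hp).2) ?_
    simp only [riemannInv] at h1 h2
    linarith [hp.2.1]
  have habs : ∀ p ∈ backwardCone c x₀ t₀, |cP K γ τ p.1 p.2| = cP K γ τ p.1 p.2 :=
    fun p hp => abs_of_nonneg (cP_nonneg (hτ_pos _ _ (hsub hp).1 (hsub hp).2))
  have hder (σ : ℝ) (p : ℝ × ℝ) (hp : p ∈ backwardCone c x₀ t₀) (hpt : 0 < p.2) :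
      HasFDerivAt (riemannInv K γ σ u τ) (fderiv ℝ (riemannInv K γ σ u τ) p) p :=
    (((hreg σ).contDiffAt (strip_mem_nhds (hsub hp) hpt)).differentiableAt
      (by norm_num)).hasFDerivAt
  have hdir (p : ℝ × ℝ →L[ℝ] ℝ) (a : ℝ) : p (a, 1) = p (0, 1) + a * p (1, 0) := by
    have : ((a, 1) : ℝ × ℝ) = (0, 1) + a • ((1, 0) : ℝ × ℝ) := by simp
    rw [this, map_add, map_smul, smul_eq_mul]
  have hneg := neg_on_backwardCone (c := c) (x₀ := x₀) (t₀ := t₀) hc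
    (f := fun p => riemannInv K γ 1 u τ p - S - p.2)
    (g := fun p => -riemannInv K γ (-1) u τ p - S - p.2)
    ((((hreg 1).continuousOn.mono hsub).sub continuousOn_const).sub continuous_snd.continuousOn)
    ((((hreg (-1)).continuousOn.mono hsub).neg.sub continuousOn_const).sub
      continuous_snd.continuousOn)
    (by
      rintro ⟨x, t⟩ - rfl
      have h1 := hη0 x
      have h2 := abs_le.1 (le_refl |u x 0|)
      simp only [riemannInv]
      constructor <;> linarith)
    (by
      intro p hp hpt hf hg
      refine ⟨cP K γ τ p.1 p.2, _, (habs p hp).trans_le (hspeed p hp hf.le hg),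
        ((hder 1 p hp hpt).sub_const S).sub hasFDerivAt_snd, ?_⟩
      have := (riemannInv_transport hK hγ (σ := 1) (by norm_num) hu_reg hτ_reg hτ_pos hpde
        (hsub hp) hpt).1
      simp only [sub_apply, ContinuousLinearMap.coe_snd', hdir _ (cP K γ τ p.1 p.2)]
      linarith)
    (by
      intro p hp hpt hg hf
      refine ⟨-cP K γ τ p.1 p.2, _,
        ((abs_neg _).trans (habs p hp)).trans_le (hspeed p hp hf hg.le),
        (((hder (-1) p hp hpt).neg).sub_const S).sub hasFDerivAt_snd, ?_⟩
      have := (riemannInv_transport hK hγ (σ := -1) (by norm_num) hu_reg hτ_reg hτ_pos hpde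
        (hsub hp) hpt).1
      simp only [sub_apply, neg_apply, ContinuousLinearMap.coe_snd', hdir _ (-cP K γ τ p.1 p.2)]
      linarith)
  exact ⟨c, hc, fun p hp => hspeed p hp (hneg p hp).1.le (hneg p hp).2.le⟩

/-- The gradient variable `u_x + σ η_x` crosses the barrier `M - δ exp (-L t)` only downwards, as
long as the other gradient variable lies below the barrier. -/
lemma riemannGrad_barrier (hK : 0 < K) (hγ : 1 < γ) {σ : ℝ} (hσ : σ ^ 2 = 1)
    (hu_reg : ContDiffOn ℝ 2 (fun p : ℝ × ℝ => u p.1 p.2) (strip T))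
    (hτ_reg : ContDiffOn ℝ 2 (fun p : ℝ × ℝ => τ p.1 p.2) (strip T))
    (hτ_pos : ∀ x t : ℝ, 0 ≤ t → (t : EReal) < T → 0 < τ x t)
    (hpde : ∀ x t : ℝ, 0 ≤ t → (t : EReal) < T → pSystem K γ u τ x t)
    {M δ B k L : ℝ} (hM : 0 ≤ M) (hδ : 0 < δ) (hL : k * (M + B) < L)
    {p : ℝ × ℝ} (hp : p ∈ strip T) (hpt : 0 < p.2)
    (hB : -B ≤ riemannGrad K γ (-σ) u τ p)
    (hk : (γ + 1) / (4 * τ p.1 p.2) ≤ k)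
    (hf : riemannGrad K γ σ u τ p - M + δ * Real.exp (-L * p.2) = 0)
    (hg : riemannGrad K γ (-σ) u τ p - M + δ * Real.exp (-L * p.2) ≤ 0) :
    ∃ f' : ℝ × ℝ →L[ℝ] ℝ,
      HasFDerivAt (fun q => riemannGrad K γ σ u τ q - M + δ * Real.exp (-L * q.2)) f' p ∧
        f' (σ * cP K γ τ p.1 p.2, 1) < 0 := by
  obtain ⟨G', hG', hval⟩ := riemannGrad_riccati hK hγ hσ hu_reg hτ_reg hτ_pos hpde hp hpt
  have hsnd : HasFDerivAt (fun q : ℝ × ℝ => q.2) (ContinuousLinearMap.snd ℝ ℝ ℝ) p :=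
    hasFDerivAt_snd
  refine ⟨_, (hG'.sub_const M).add (((hsnd.const_mul (-L)).exp).const_mul δ), ?_⟩
  simp only [add_apply, smul_apply, ContinuousLinearMap.coe_snd', smul_eq_mul, hval, mul_one]
  have hτp := hτ_pos p.1 p.2 hp.1 hp.2
  have hκ : 0 < (γ + 1) / (4 * τ p.1 p.2) := div_pos (by linarith) (by linarith)
  set κ := (γ + 1) / (4 * τ p.1 p.2)
  set a := riemannGrad K γ σ u τ p
  set b := riemannGrad K γ (-σ) u τ p
  have he : 0 < δ * Real.exp (-L * p.2) := by positivity
  set e := δ * Real.exp (-L * p.2)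
  have ha : a = M - e := by linarith
  have hba : b - a ≤ 0 := by linarith
  have h1 : κ * a * (b - a) ≤ κ * (a - b) * e := by
    have : 0 ≤ κ * (a - b) * M := mul_nonneg (mul_nonneg hκ.le (by linarith)) hM
    rw [ha] at this ⊢
    linarith
  have h2 : κ * (a - b) ≤ k * (M + B) :=
    mul_le_mul hk (by linarith) (by linarith) (hκ.le.trans hk)
  have h3 : κ * (a - b) * e < L * e := mul_lt_mul_of_pos_right (h2.trans_lt hL) he
  have h4 : δ * (Real.exp (-L * p.2) * -L) = -(L * e) := by
    simp only [e]
    ring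
  rw [h4]
  linarith

end

/-- invariant upper bound for the gradient variables of the p-system. -/
theorem psystem_alpha_beta_upper_bound
    (K γ : ℝ) (hK : 0 < K) (hγ : 1 < γ)
    (T : EReal) (hT : 0 < T)
    (u τ : ℝ → ℝ → ℝ)
    (hu_reg : ContDiffOn ℝ 2 (fun p : ℝ × ℝ => u p.1 p.2) (strip T))
    (hτ_reg : ContDiffOn ℝ 2 (fun p : ℝ × ℝ => τ p.1 p.2) (strip T))
    (hτ_pos : ∀ x t : ℝ, 0 ≤ t → (t : EReal) < T → 0 < τ x t)
    (hpde : ∀ x t : ℝ, 0 ≤ t → (t : EReal) < T → pSystem K γ u τ x t)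
    (hbdd : ∃ C : ℝ, ∀ x : ℝ, |u x 0| ≤ C ∧ τ x 0 ≤ C ∧ 1 / τ x 0 ≤ C ∧
      |alphaP K γ u τ x 0| ≤ C ∧ |betaP K γ u τ x 0| ≤ C)
    (M : ℝ)
    (hM0 : ∀ x : ℝ, alphaP K γ u τ x 0 < M ∧ betaP K γ u τ x 0 < M) :
    ∀ x t : ℝ, 0 ≤ t → (t : EReal) < T →
      alphaP K γ u τ x t < M ∧ betaP K γ u τ x t < M := by
  obtain ⟨C, hC⟩ := hbdd
  intro x₀ t₀ ht₀ ht₀T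
  have hM : 0 ≤ M := by
    have hslice (x : ℝ) := hasDerivAt_slice_fst (f := u) (p := (x, 0)) (T := T)
      ⟨le_rfl, by exact_mod_cast hT⟩
      ((hu_reg.differentiableOn (by norm_num)) (x, 0)
        ⟨le_rfl, by exact_mod_cast hT⟩).hasFDerivWithinAt
    refine nonneg_of_deriv_le_of_bounded (f := fun y => u y 0)
      (fun x => (hslice x).differentiableAt) (fun x => (hC x).1) fun x => ?_
    obtain ⟨h1, h2⟩ := hM0 x
    simp only [alphaP, betaP, pdx] at h1 h2
    linarith
  obtain ⟨c, hc, hspeed⟩ := exists_backwardCone_cP_le hK hγ hu_reg hτ_reg hτ_pos hpde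
    (fun x => (hC x).1) (fun x => (hC x).2.2.1) (x₀ := x₀) ht₀ ht₀T
  have hsub : backwardCone c x₀ t₀ ⊆ strip T := backwardCone_subset_strip ht₀T
  have hcompact := isCompact_backwardCone c x₀ t₀
  have hα (q : ℝ × ℝ) : riemannGrad K γ 1 u τ q = alphaP K γ u τ q.1 q.2 := by
    simp [riemannGrad, alphaP]
  have hβ (q : ℝ × ℝ) : riemannGrad K γ (-1) u τ q = betaP K γ u τ q.1 q.2 := by
    simp [riemannGrad, betaP, sub_eq_add_neg]
  have hcont (σ : ℝ) : ContinuousOn (riemannGrad K γ σ u τ) (backwardCone c x₀ t₀) :=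
    (continuousOn_riemannGrad hT σ hu_reg hτ_reg hτ_pos).mono hsub
  have hτp : ∀ p ∈ backwardCone c x₀ t₀, 0 < τ p.1 p.2 :=
    fun p hp => hτ_pos _ _ (hsub hp).1 (hsub hp).2
  have hinit : IsCompact (backwardCone c x₀ t₀ ∩ {p | p.2 = 0}) :=
    hcompact.inter_right (isClosed_eq continuous_snd continuous_const)
  obtain ⟨δ, hδ, hδ'⟩ := hinit.exists_forall_le' (a := 0)
    (f := fun p => min (M - riemannGrad K γ 1 u τ p) (M - riemannGrad K γ (-1) u τ p))
    (((continuousOn_const.sub (hcont 1)).inf (continuousOn_const.sub (hcont (-1)))).mono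
      inter_subset_left)
    (by
      rintro ⟨x, t⟩ ⟨-, rfl⟩
      have := hM0 x
      exact lt_min (by rw [hα]; linarith [this.1]) (by rw [hβ]; linarith [this.2]))
  obtain ⟨B₁, hB₁⟩ := hcompact.exists_bound_of_continuousOn (hcont 1)
  obtain ⟨B₂, hB₂⟩ := hcompact.exists_bound_of_continuousOn (hcont (-1))
  obtain ⟨k, hk⟩ := hcompact.exists_bound_of_continuousOn
    (f := fun p : ℝ × ℝ => (γ + 1) / (4 * τ p.1 p.2))
    (continuousOn_const.div (continuousOn_const.mul (hτ_reg.continuousOn.mono hsub))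
      fun p hp => by linarith [hτp p hp])
  have hk' : ∀ p ∈ backwardCone c x₀ t₀, (γ + 1) / (4 * τ p.1 p.2) ≤ k :=
    fun p hp => (le_abs_self _).trans (hk p hp)
  set B := max B₁ B₂
  have hlow₁ : ∀ p ∈ backwardCone c x₀ t₀, -B ≤ riemannGrad K γ 1 u τ p := fun p hp =>
    (abs_le.1 ((hB₁ p hp).trans (le_max_left _ _))).1
  have hlow₂ : ∀ p ∈ backwardCone c x₀ t₀, -B ≤ riemannGrad K γ (-1) u τ p := fun p hp =>
    (abs_le.1 ((hB₂ p hp).trans (le_max_right _ _))).1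
  set L := k * (M + B) + 1
  have hLlt : k * (M + B) < L := by linarith
  have habs : ∀ p ∈ backwardCone c x₀ t₀, |cP K γ τ p.1 p.2| ≤ c := fun p hp => by
    rw [abs_of_nonneg (cP_nonneg (hτp p hp))]
    exact hspeed p hp
  have hbarrier : ContinuousOn (fun q : ℝ × ℝ => δ / 2 * Real.exp (-L * q.2))
      (backwardCone c x₀ t₀) := by fun_prop
  have hneg := neg_on_backwardCone (c := c) (x₀ := x₀) (t₀ := t₀) hc
    (f := fun q => riemannGrad K γ 1 u τ q - M + δ / 2 * Real.exp (-L * q.2))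
    (g := fun q => riemannGrad K γ (-1) u τ q - M + δ / 2 * Real.exp (-L * q.2))
    (((hcont 1).sub continuousOn_const).add hbarrier)
    (((hcont (-1)).sub continuousOn_const).add hbarrier)
    (by
      intro p hp hp0
      have h := le_min_iff.1 (hδ' p ⟨hp, hp0⟩)
      simp only [hp0, mul_zero, Real.exp_zero, mul_one]
      constructor <;> linarith [h.1, h.2])
    (by
      intro p hp hpt hf hg
      obtain ⟨f', hf', hlt⟩ := riemannGrad_barrier hK hγ (σ := 1) (by norm_num) hu_reg hτ_reg
        hτ_pos hpde hM (half_pos hδ) hLlt (hsub hp) hpt (hlow₂ p hp) (hk' p hp) hf hg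
      exact ⟨_, f', by simpa using habs p hp, hf', hlt⟩)
    (by
      intro p hp hpt hg hf
      obtain ⟨g', hg', hlt⟩ := riemannGrad_barrier hK hγ (σ := -1) (by norm_num) hu_reg hτ_reg
        hτ_pos hpde hM (half_pos hδ) hLlt (hsub hp) hpt (by simpa using hlow₁ p hp)
        (hk' p hp) hg (by simpa using hf)
      exact ⟨_, g', by simpa using habs p hp, hg', hlt⟩)
  have hapex := hneg (x₀, t₀) ⟨ht₀, le_rfl, by simp⟩
  have he : 0 < δ / 2 * Real.exp (-L * t₀) := by positivity
  simp only [hα, hβ] at hapex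
  constructor <;> linarith [hapex.1, hapex.2]
end
end

section
/- Let (u,τ) be a classical solution of the p-system on ℝ×[0,T) (T a finite positive constant or infinity), twice continuously differentiable, such that at t=0 the functions u(·,0), τ(·,0)>0, ρ(·,0)=1/τ(·,0), α(·,0), β(·,0) are all uniformly bounded, and let M be a constant with α(x,0) < M and β(x,0) < M for all x ∈ ℝ. Then τ_t(x,t) = u_x(x,t) = (α(x,t)+β(x,t))/2 < M for all (x,t) ∈ ℝ×[0,T). -/
open Real Set MeasureTheory

noncomputable section

open Filter Topology

/-! ### Line derivatives -/

section LineDeriv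

variable {f g : ℝ × ℝ → ℝ} {f' g' : ℝ} {p v : ℝ × ℝ}

lemma HasLineDerivAt.add_real (hf : HasLineDerivAt ℝ f f' p v) (hg : HasLineDerivAt ℝ g g' p v) :
    HasLineDerivAt ℝ (fun q => f q + g q) (f' + g') p v :=
  HasDerivAt.fun_add hf hg

lemma HasLineDerivAt.sub_real (hf : HasLineDerivAt ℝ f f' p v) (hg : HasLineDerivAt ℝ g g' p v) :
    HasLineDerivAt ℝ (fun q => f q - g q) (f' - g') p v :=
  HasDerivAt.fun_sub hf hg

lemma HasLineDerivAt.mul_real (hf : HasLineDerivAt ℝ f f' p v) (hg : HasLineDerivAt ℝ g g' p v) :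
    HasLineDerivAt ℝ (fun q => f q * g q) (f' * g p + f p * g') p v := by
  simpa using! HasDerivAt.fun_mul hf hg

lemma HasDerivAt.comp_hasLineDerivAt {φ : ℝ → ℝ} {φ' : ℝ} (hφ : HasDerivAt φ φ' (f p))
    (hf : HasLineDerivAt ℝ f f' p v) : HasLineDerivAt ℝ (fun q => φ (f q)) (φ' * f') p v := by
  have h0 : f p = (fun s : ℝ => f (p + s • v)) 0 := by simp
  rw [h0] at hφ
  exact HasDerivAt.comp (0 : ℝ) hφ hf

lemma HasDerivAt.hasLineDerivAt_snd {φ : ℝ → ℝ} {φ' a : ℝ} (hφ : HasDerivAt φ φ' p.2) :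
    HasLineDerivAt ℝ (fun q : ℝ × ℝ => φ q.2) φ' p (a, 1) := by
  simpa using hφ.comp_hasLineDerivAt (f := Prod.snd)
    ((hasFDerivAt_snd (𝕜 := ℝ) (p := p)).hasLineDerivAt (a, 1))

lemma HasLineDerivAt.nonneg_of_backward (hf : HasLineDerivAt ℝ f f' p v) {d : ℝ} (hd : 0 < d)
    (h : ∀ s ∈ Ico (-d) 0, f (p + s • v) ≤ f p) : 0 ≤ f' := by
  have hlim := hf.tendsto_slope_zero_left
  refine ge_of_tendsto hlim ?_
  filter_upwards [Ico_mem_nhdsLT (neg_lt_zero.mpr hd)] with s hs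
  have h1 := h s hs
  rw [smul_eq_mul]
  exact mul_nonneg_of_nonpos_of_nonpos (inv_nonpos.mpr hs.2.le) (by linarith)

end LineDeriv

/-! ### Domains of dependence and the first crossing principle -/

/-- The backward triangle with apex `(x₀, t₁)` and maximal speed `L`. -/
def backwardTriangle (x₀ t₁ L : ℝ) : Set (ℝ × ℝ) :=
  {p | 0 ≤ p.2 ∧ p.2 ≤ t₁ ∧ |p.1 - x₀| ≤ L * (t₁ - p.2)}

lemma isCompact_backwardTriangle (x₀ t₁ : ℝ) {L : ℝ} (hL : 0 ≤ L) :
    IsCompact (backwardTriangle x₀ t₁ L) := by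
  have hclosed : IsClosed (backwardTriangle x₀ t₁ L) :=
    (isClosed_le continuous_const continuous_snd).inter
      ((isClosed_le continuous_snd continuous_const).inter
        (isClosed_le (f := fun p : ℝ × ℝ => |p.1 - x₀|) (g := fun p : ℝ × ℝ => L * (t₁ - p.2))
          (by fun_prop) (by fun_prop)))
  refine (isCompact_Icc (a := x₀ - L * t₁) (b := x₀ + L * t₁)).prod
    (isCompact_Icc (a := (0 : ℝ)) (b := t₁)) |>.of_isClosed_subset hclosed ?_
  rintro ⟨x, t⟩ ⟨h0, h1, h2⟩
  have h3 := abs_le.mp h2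
  simp only at *
  have : 0 ≤ L * t := mul_nonneg hL h0
  exact ⟨⟨by linarith, by linarith⟩, h0, h1⟩

lemma backward_mem_backwardTriangle {x₀ t₁ L a s : ℝ} {p : ℝ × ℝ}
    (hp : p ∈ backwardTriangle x₀ t₁ L) (ha : |a| ≤ L) (hs : s ∈ Icc (-p.2) 0) :
    p + s • ((a, 1) : ℝ × ℝ) ∈ backwardTriangle x₀ t₁ L := by
  obtain ⟨h0, h1, h2⟩ := hp
  obtain ⟨hs1, hs2⟩ := hs
  refine ⟨by simp; linarith, by simp; linarith, ?_⟩
  have h3 : |s * a| ≤ -s * L := by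
    rw [abs_mul, abs_of_nonpos hs2]
    exact mul_le_mul_of_nonneg_left ha (by linarith)
  have h4 : (p + s • ((a, 1) : ℝ × ℝ)).1 - x₀ = (p.1 - x₀) + s * a := by simp; ring
  rw [h4]
  refine (abs_add_le _ _).trans ?_
  have h5 : (p + s • ((a, 1) : ℝ × ℝ)).2 = p.2 + s := by simp
  rw [h5]
  linarith

/-- Two functions that are negative on the base of a backward triangle stay negative, provided that
wherever one of them reaches zero first, it strictly decreases in an admissible direction. -/
lemma neg_on_backwardTriangle {x₀ t₁ L : ℝ} (hL : 0 ≤ L) {f g : ℝ × ℝ → ℝ}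
    (hf : ContinuousOn f (backwardTriangle x₀ t₁ L))
    (hg : ContinuousOn g (backwardTriangle x₀ t₁ L))
    (h0 : ∀ p ∈ backwardTriangle x₀ t₁ L, p.2 = 0 → f p < 0 ∧ g p < 0)
    (hf' : ∀ p ∈ backwardTriangle x₀ t₁ L, 0 < p.2 → f p = 0 → g p ≤ 0 →
      ∃ a v, |a| ≤ L ∧ v < 0 ∧ HasLineDerivAt ℝ f v p (a, 1))
    (hg' : ∀ p ∈ backwardTriangle x₀ t₁ L, 0 < p.2 → g p = 0 → f p ≤ 0 →
      ∃ a v, |a| ≤ L ∧ v < 0 ∧ HasLineDerivAt ℝ g v p (a, 1)) :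
    ∀ p ∈ backwardTriangle x₀ t₁ L, f p < 0 ∧ g p < 0 := by
  by_contra! hcon
  obtain ⟨q, hq, hq'⟩ := hcon
  have hK := isCompact_backwardTriangle x₀ t₁ hL
  set Δ := backwardTriangle x₀ t₁ L with hΔ
  have hF : ContinuousOn (fun p => max (f p) (g p)) Δ := ContinuousOn.sup hf hg
  have hZ : IsCompact (Δ ∩ (fun p => max (f p) (g p)) ⁻¹' Ici 0) :=
    hK.of_isClosed_subset (hF.preimage_isClosed_of_isClosed hK.isClosed isClosed_Ici)
      inter_subset_left
  have hqZ : q ∈ Δ ∩ (fun p => max (f p) (g p)) ⁻¹' Ici 0 := by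
    refine ⟨hq, ?_⟩
    rcases lt_or_ge (f q) 0 with h | h
    · exact le_max_of_le_right (hq' h)
    · exact le_max_of_le_left h
  obtain ⟨p, ⟨hp, hpF⟩, hmin⟩ := hZ.exists_isMinOn ⟨q, hqZ⟩ continuous_snd.continuousOn
  have hp2 : 0 < p.2 := by
    refine lt_of_le_of_ne hp.1 fun h => ?_
    have := h0 p hp h.symm
    exact absurd hpF (not_le.mpr (max_lt this.1 this.2))
  have hback : ∀ a, |a| ≤ L → ∀ s ∈ Ico (-p.2) 0,
      f (p + s • ((a, 1) : ℝ × ℝ)) < 0 ∧ g (p + s • ((a, 1) : ℝ × ℝ)) < 0 := by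
    intro a ha s hs
    rw [← max_lt_iff]
    by_contra! hge
    have h1 : p.2 ≤ (p + s • ((a, 1) : ℝ × ℝ)).2 :=
      hmin ⟨backward_mem_backwardTriangle hp ha ⟨hs.1, hs.2.le⟩, hge⟩
    simp at h1
    linarith [hs.2]
  have hvert : Tendsto (fun s : ℝ => p + s • ((0, 1) : ℝ × ℝ)) (𝓝[<] 0) (𝓝[Δ] p) := by
    refine tendsto_nhdsWithin_iff.mpr ⟨?_, ?_⟩
    · have : Continuous fun s : ℝ => p + s • ((0, 1) : ℝ × ℝ) := by fun_prop
      simpa using (this.tendsto 0).mono_left nhdsWithin_le_nhds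
    · filter_upwards [Ico_mem_nhdsLT (neg_lt_zero.mpr hp2)] with s hs
      exact backward_mem_backwardTriangle hp (by simpa using hL) ⟨hs.1, hs.2.le⟩
  have hev : ∀ᶠ s : ℝ in 𝓝[<] 0, f (p + s • ((0, 1) : ℝ × ℝ)) < 0 ∧
      g (p + s • ((0, 1) : ℝ × ℝ)) < 0 := by
    filter_upwards [Ico_mem_nhdsLT (neg_lt_zero.mpr hp2)] with s hs
    exact hback 0 (by simpa using hL) s hs
  have hfp : f p ≤ 0 := le_of_tendsto ((hf p hp).tendsto.comp hvert) (hev.mono fun s h => h.1.le)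
  have hgp : g p ≤ 0 := le_of_tendsto ((hg p hp).tendsto.comp hvert) (hev.mono fun s h => h.2.le)
  rcases le_max_iff.mp (show 0 ≤ max (f p) (g p) from hpF) with h | h
  · have hz : f p = 0 := le_antisymm hfp h
    obtain ⟨a, v, ha, hv, hd⟩ := hf' p hp hp2 hz hgp
    refine hv.not_ge (hd.nonneg_of_backward hp2 fun s hs => ?_)
    rw [hz]; exact (hback a ha s hs).1.le
  · have hz : g p = 0 := le_antisymm hgp h
    obtain ⟨a, v, ha, hv, hd⟩ := hg' p hp hp2 hz hfp
    refine hv.not_ge (hd.nonneg_of_backward hp2 fun s hs => ?_)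
    rw [hz]; exact (hback a ha s hs).2.le

/-! ### Constitutive functions -/

/-- The Lagrangian wave speed as a function of the specific volume. -/
def waveSpeed (K γ y : ℝ) : ℝ := Real.sqrt (K * γ) * y ^ (-(γ + 1) / 2)

/-- The variable `η` as a function of the specific volume. -/
def etaFun (K γ y : ℝ) : ℝ := 2 * Real.sqrt (K * γ) / (γ - 1) * y ^ (-(γ - 1) / 2)

section Constitutive

variable {K γ y : ℝ}

lemma waveSpeed_pos (hK : 0 < K) (hγ : 1 < γ) (hy : 0 < y) : 0 < waveSpeed K γ y :=
  mul_pos (Real.sqrt_pos.mpr (mul_pos hK (by linarith))) (Real.rpow_pos_of_pos hy _)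

lemma hasDerivAt_waveSpeed (hy : 0 < y) :
    HasDerivAt (waveSpeed K γ) (-(γ + 1) / 2 * waveSpeed K γ y / y) y := by
  have h := (Real.hasDerivAt_rpow_const (p := -(γ + 1) / 2) (Or.inl hy.ne')).const_mul
    (Real.sqrt (K * γ))
  refine h.congr_deriv ?_
  rw [Real.rpow_sub_one hy.ne']
  simp only [waveSpeed]
  ring

lemma hasDerivAt_etaFun (hγ : 1 < γ) (hy : 0 < y) :
    HasDerivAt (etaFun K γ) (-waveSpeed K γ y) y := by
  have h := (Real.hasDerivAt_rpow_const (p := -(γ - 1) / 2) (Or.inl hy.ne')).const_mul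
    (2 * Real.sqrt (K * γ) / (γ - 1))
  refine h.congr_deriv ?_
  have h1 : -(γ - 1) / 2 - 1 = -(γ + 1) / 2 := by ring
  have h2 : γ - 1 ≠ 0 := by linarith
  rw [h1, waveSpeed]
  field_simp

lemma hasDerivAt_pressure (hK : 0 < K) (hγ : 1 < γ) (hy : 0 < y) :
    HasDerivAt (fun z => K * z ^ (-γ)) (-waveSpeed K γ y ^ 2) y := by
  have h := (Real.hasDerivAt_rpow_const (p := -γ) (Or.inl hy.ne')).const_mul K
  refine h.congr_deriv ?_
  rw [waveSpeed, mul_pow, Real.sq_sqrt (mul_nonneg hK.le (by linarith)), ← Real.rpow_natCast,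
    ← Real.rpow_mul hy.le]
  have h1 : -(γ + 1) / 2 * ((2 : ℕ) : ℝ) = -γ - 1 := by push_cast; ring
  rw [h1]
  ring

lemma etaFun_le_of_inv_le (hγ : 1 < γ) (hy : 0 < y) {C : ℝ} (h : 1 / y ≤ C) :
    etaFun K γ y ≤ 2 * Real.sqrt (K * γ) / (γ - 1) * C ^ ((γ - 1) / 2) := by
  have h1 : y ^ (-(γ - 1) / 2) = (1 / y) ^ ((γ - 1) / 2) := by
    rw [one_div, Real.inv_rpow hy.le, ← Real.rpow_neg hy.le]
    ring_nf
  rw [etaFun, h1]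
  have h2 : 0 < γ - 1 := by linarith
  gcongr

lemma waveSpeed_le_of_etaFun_le (hK : 0 < K) (hγ : 1 < γ) (hy : 0 < y) {H : ℝ}
    (h : etaFun K γ y ≤ H) :
    waveSpeed K γ y ≤ Real.sqrt (K * γ) *
      (H / (2 * Real.sqrt (K * γ) / (γ - 1))) ^ ((γ + 1) / (γ - 1)) := by
  have h2 : 0 < γ - 1 := by linarith
  have h3 : 0 < Real.sqrt (K * γ) := Real.sqrt_pos.mpr (mul_pos hK (by linarith))
  have h4 : y ^ (-(γ - 1) / 2) ≤ H / (2 * Real.sqrt (K * γ) / (γ - 1)) := by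
    rw [le_div_iff₀ (by positivity), mul_comm]
    exact h
  have h5 : y ^ (-(γ + 1) / 2) = (y ^ (-(γ - 1) / 2)) ^ ((γ + 1) / (γ - 1)) := by
    rw [← Real.rpow_mul hy.le]
    congr 1
    field_simp
  rw [waveSpeed, h5]
  have h6 : 0 ≤ (γ + 1) / (γ - 1) := by positivity
  gcongr

end Constitutive

/-! ### Classical solutions on a slab -/

/-- The slab `ℝ × [0, b)`. -/
def slab (b : ℝ) : Set (ℝ × ℝ) := univ ×ˢ Ico 0 b

lemma uniqueDiffOn_slab (b : ℝ) : UniqueDiffOn ℝ (slab b) :=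
  uniqueDiffOn_univ.prod (uniqueDiffOn_Ico 0 b)

lemma slab_mem_nhds {b : ℝ} {p : ℝ × ℝ} (hp : p.2 ∈ Ioo 0 b) : slab b ∈ 𝓝 p :=
  prod_mem_nhds univ_mem (Ico_mem_nhds hp.1 hp.2)

lemma eventually_snd_mem_Ioo {b : ℝ} {p : ℝ × ℝ} (hp : p.2 ∈ Ioo 0 b) :
    ∀ᶠ q : ℝ × ℝ in 𝓝 p, q.2 ∈ Ioo 0 b :=
  continuous_snd.continuousAt.eventually (isOpen_Ioo.mem_nhds hp)

lemma backwardTriangle_subset_slab {x₀ t₁ L b : ℝ} (hb : t₁ < b) :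
    backwardTriangle x₀ t₁ L ⊆ slab b :=
  fun _ hp => ⟨mem_univ _, hp.1, hp.2.1.trans_lt hb⟩

section Regularity

variable {F : ℝ × ℝ → ℝ} {b : ℝ} {p : ℝ × ℝ}

lemma hasFDerivAt_of_slab (hF : ContDiffOn ℝ 2 F (slab b)) (hp : p.2 ∈ Ioo 0 b) :
    HasFDerivAt F (fderivWithin ℝ F (slab b) p) p :=
  ((hF.differentiableOn (by norm_num)) p
    (mem_of_mem_nhds (slab_mem_nhds hp))).hasFDerivWithinAt.hasFDerivAt (slab_mem_nhds hp)

lemma exists_symm_second_deriv_of_slab (hF : ContDiffOn ℝ 2 F (slab b)) (hp : p.2 ∈ Ioo 0 b) :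
    ∃ D : ℝ × ℝ →L[ℝ] ℝ × ℝ →L[ℝ] ℝ, HasFDerivAt (fderivWithin ℝ F (slab b)) D p ∧
      ∀ v w, D v w = D w v := by
  have h1 : ContDiffOn ℝ 1 (fderivWithin ℝ F (slab b)) (slab b) :=
    hF.fderivWithin (uniqueDiffOn_slab b) (by norm_num)
  have h2 : HasFDerivAt (fderivWithin ℝ F (slab b)) _ p :=
    ((h1.contDiffAt (slab_mem_nhds hp)).differentiableAt (by norm_num)).hasFDerivAt
  refine ⟨_, h2, second_derivative_symmetric_of_eventually (𝕜 := ℝ) (f := F) ?_ h2⟩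
  filter_upwards [eventually_snd_mem_Ioo hp] with q hq
  exact hasFDerivAt_of_slab hF hq

lemma hasDerivAt_fst_of_slab (hF : ContDiffOn ℝ 2 F (slab b)) (hp : p ∈ slab b) :
    HasDerivAt (fun y => F (y, p.2)) (fderivWithin ℝ F (slab b) p (1, 0)) p.1 := by
  have h1 := ((hF.differentiableOn (by norm_num)) p hp).hasFDerivWithinAt
  have h2 : HasDerivWithinAt (fun y : ℝ => (y, p.2)) ((1, 0) : ℝ × ℝ) univ p.1 :=
    ((hasDerivAt_id p.1).prodMk (hasDerivAt_const p.1 p.2)).hasDerivWithinAt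
  have h3 := HasFDerivWithinAt.comp_hasDerivWithinAt (x := p.1) (f := fun y : ℝ => (y, p.2))
    (t := slab b) h1 h2 (fun y _ => ⟨mem_univ _, hp.2⟩)
  exact hasDerivWithinAt_univ.mp h3

lemma hasDerivAt_snd_of_slab (hF : ContDiffOn ℝ 2 F (slab b)) (hp : p.2 ∈ Ioo 0 b) :
    HasDerivAt (fun s => F (p.1, s)) (fderivWithin ℝ F (slab b) p (0, 1)) p.2 := by
  have h1 := hasFDerivAt_of_slab hF hp
  exact HasFDerivAt.comp_hasDerivAt (f := fun s : ℝ => (p.1, s)) p.2 h1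
    ((hasDerivAt_const p.2 p.1).prodMk (hasDerivAt_id p.2))

lemma HasFDerivAt.apply_const {D : ℝ × ℝ → ℝ × ℝ →L[ℝ] ℝ} {D' : ℝ × ℝ →L[ℝ] ℝ × ℝ →L[ℝ] ℝ}
    (hD : HasFDerivAt D D' p) (v w : ℝ × ℝ) :
    HasLineDerivAt ℝ (fun q => D q w) (D' v w) p v := by
  simpa using (hD.clm_apply (hasFDerivAt_const w p)).hasLineDerivAt v

end Regularity

lemma ContinuousLinearMap.apply_mk_one {E : Type*} [NormedAddCommGroup E] [NormedSpace ℝ E]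
    (A : ℝ × ℝ →L[ℝ] E) (a : ℝ) : A (a, 1) = a • A (1, 0) + A (0, 1) := by
  rw [← map_smul, ← map_add]
  simp

/-- First-order data of a classical solution `(U, W)` of the p-system on a slab, with spatial
derivatives `Ux`, `Wx`: continuity, and the derivatives of all four functions along directions
`(a, 1)`, where time derivatives have been eliminated by means of the equations. -/
structure IsSlabSolution (K γ b : ℝ) (U W Ux Wx : ℝ × ℝ → ℝ) : Prop where
  continuousOn_U : ContinuousOn U (slab b)
  continuousOn_W : ContinuousOn W (slab b)
  continuousOn_Ux : ContinuousOn Ux (slab b)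
  continuousOn_Wx : ContinuousOn Wx (slab b)
  pos : ∀ p ∈ slab b, 0 < W p
  deriv_U : ∀ p : ℝ × ℝ, p.2 ∈ Ioo 0 b → ∀ a : ℝ,
    HasLineDerivAt ℝ U (a * Ux p + waveSpeed K γ (W p) ^ 2 * Wx p) p (a, 1)
  deriv_W : ∀ p : ℝ × ℝ, p.2 ∈ Ioo 0 b → ∀ a : ℝ,
    HasLineDerivAt ℝ W (a * Wx p + Ux p) p (a, 1)
  deriv_grad : ∀ p : ℝ × ℝ, p.2 ∈ Ioo 0 b → ∃ Uxx Wxx : ℝ, ∀ a : ℝ,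
    HasLineDerivAt ℝ Ux (a * Uxx + (-(γ + 1) * waveSpeed K γ (W p) ^ 2 / W p * Wx p ^ 2
      + waveSpeed K γ (W p) ^ 2 * Wxx)) p (a, 1) ∧
    HasLineDerivAt ℝ Wx (a * Wxx + Uxx) p (a, 1)

lemma isSlabSolution_of_contDiffOn {K γ b : ℝ} (hK : 0 < K) (hγ : 1 < γ) {u τ : ℝ → ℝ → ℝ}
    (hu : ContDiffOn ℝ 2 (fun p : ℝ × ℝ => u p.1 p.2) (slab b))
    (hτ : ContDiffOn ℝ 2 (fun p : ℝ × ℝ => τ p.1 p.2) (slab b))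
    (hpos : ∀ p ∈ slab b, 0 < τ p.1 p.2)
    (hpde : ∀ p ∈ slab b, pSystem K γ u τ p.1 p.2) :
    IsSlabSolution K γ b (fun p => u p.1 p.2) (fun p => τ p.1 p.2)
      (fun p => pdx u p.1 p.2) (fun p => pdx τ p.1 p.2) := by
  set U : ℝ × ℝ → ℝ := fun p => u p.1 p.2 with hU
  set W : ℝ × ℝ → ℝ := fun p => τ p.1 p.2 with hW
  have hux : ∀ p ∈ slab b, pdx u p.1 p.2 = fderivWithin ℝ U (slab b) p (1, 0) :=
    fun p hp => (hasDerivAt_fst_of_slab hu hp).deriv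
  have hτx : ∀ p ∈ slab b, pdx τ p.1 p.2 = fderivWithin ℝ W (slab b) p (1, 0) :=
    fun p hp => (hasDerivAt_fst_of_slab hτ hp).deriv
  have hmem : ∀ p : ℝ × ℝ, p.2 ∈ Ioo 0 b → p ∈ slab b :=
    fun p hp => mem_of_mem_nhds (slab_mem_nhds hp)
  have hτt : ∀ p : ℝ × ℝ, p.2 ∈ Ioo 0 b →
      fderivWithin ℝ W (slab b) p (0, 1) = fderivWithin ℝ U (slab b) p (1, 0) := by
    intro p hp
    have h1 : pdt τ p.1 p.2 = _ := (hasDerivAt_snd_of_slab hτ hp).deriv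
    rw [← h1, ← hux p (hmem p hp)]
    linarith [(hpde p (hmem p hp)).1]
  have hut : ∀ p : ℝ × ℝ, p.2 ∈ Ioo 0 b →
      fderivWithin ℝ U (slab b) p (0, 1) =
        waveSpeed K γ (W p) ^ 2 * fderivWithin ℝ W (slab b) p (1, 0) := by
    intro p hp
    have h1 : pdt u p.1 p.2 = _ := (hasDerivAt_snd_of_slab hu hp).deriv
    have h2 : pdx (fun y s => K * τ y s ^ (-γ)) p.1 p.2 = _ :=
      (HasDerivAt.comp (h₂ := fun z => K * z ^ (-γ)) p.1
        (hasDerivAt_pressure hK hγ (hpos p (hmem p hp)))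
        (hasDerivAt_fst_of_slab hτ (hmem p hp))).deriv
    have h3 := (hpde p (hmem p hp)).2
    rw [h1, h2] at h3
    linarith
  have heqx : ∀ p : ℝ × ℝ, p.2 ∈ Ioo 0 b →
      (fun q => pdx u q.1 q.2) =ᶠ[𝓝 p] fun q => fderivWithin ℝ U (slab b) q (1, 0) := by
    intro p hp
    filter_upwards [slab_mem_nhds hp] with q hq using hux q hq
  have heqτ : ∀ p : ℝ × ℝ, p.2 ∈ Ioo 0 b →
      (fun q => pdx τ q.1 q.2) =ᶠ[𝓝 p] fun q => fderivWithin ℝ W (slab b) q (1, 0) := by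
    intro p hp
    filter_upwards [slab_mem_nhds hp] with q hq using hτx q hq
  have hcU := hu.continuousOn_fderivWithin (uniqueDiffOn_slab b) (by norm_num)
  have hcW := hτ.continuousOn_fderivWithin (uniqueDiffOn_slab b) (by norm_num)
  refine ⟨hu.continuousOn, hτ.continuousOn, (hcU.clm_apply continuousOn_const).congr hux,
    (hcW.clm_apply continuousOn_const).congr hτx, hpos, ?_, ?_, ?_⟩
  · intro p hp a
    have h := (hasFDerivAt_of_slab hu hp).hasLineDerivAt (a, 1)
    rw [ContinuousLinearMap.apply_mk_one, hut p hp, ← hux p (hmem p hp), ← hτx p (hmem p hp)] at h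
    exact h
  · intro p hp a
    have h := (hasFDerivAt_of_slab hτ hp).hasLineDerivAt (a, 1)
    rw [ContinuousLinearMap.apply_mk_one, hτt p hp, ← hux p (hmem p hp), ← hτx p (hmem p hp)] at h
    exact h
  · intro p hp
    obtain ⟨A, hA, hAsymm⟩ := exists_symm_second_deriv_of_slab hu hp
    obtain ⟨B, hB, hBsymm⟩ := exists_symm_second_deriv_of_slab hτ hp
    have hB01 : B (1, 0) (0, 1) = A (1, 0) (1, 0) := by
      refine (hB.apply_const (1, 0) (0, 1)).unique
        ((hA.apply_const (1, 0) (1, 0)).congr_of_eventuallyEq ?_)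
      filter_upwards [eventually_snd_mem_Ioo hp] with q hq using hτt q hq
    have hA01 : A (1, 0) (0, 1) = -(γ + 1) * waveSpeed K γ (W p) ^ 2 / W p *
        (fderivWithin ℝ W (slab b) p (1, 0)) ^ 2 + waveSpeed K γ (W p) ^ 2 * B (1, 0) (1, 0) := by
      have hc := (hasDerivAt_waveSpeed (K := K) (γ := γ)
        (hpos p (hmem p hp))).comp_hasLineDerivAt (f := W) (v := (1, 0))
        ((hasFDerivAt_of_slab hτ hp).hasLineDerivAt (1, 0))
      have h := (hc.mul_real hc).mul_real (hB.apply_const (1, 0) (1, 0))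
      have h' := (hA.apply_const (1, 0) (0, 1)).unique (h.congr_of_eventuallyEq (by
        filter_upwards [eventually_snd_mem_Ioo hp] with q hq
        rw [hut q hq]; ring))
      rw [h']
      ring
    refine ⟨A (1, 0) (1, 0), B (1, 0) (1, 0), fun a => ⟨?_, ?_⟩⟩
    · have h := (hA.apply_const (a, 1) (1, 0)).congr_of_eventuallyEq (heqx p hp)
      rw [A.apply_mk_one] at h
      simp only [add_apply, smul_apply, smul_eq_mul] at h
      rw [hAsymm (0, 1), hA01, ← hτx p (hmem p hp)] at h
      exact h
    · have h := (hB.apply_const (a, 1) (1, 0)).congr_of_eventuallyEq (heqτ p hp)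
      rw [B.apply_mk_one] at h
      simp only [add_apply, smul_apply, smul_eq_mul] at h
      rw [hBsymm (0, 1), hB01] at h
      exact h

namespace IsSlabSolution

variable {K γ b : ℝ} {U W Ux Wx : ℝ × ℝ → ℝ}

lemma continuousOn_waveSpeed (h : IsSlabSolution K γ b U W Ux Wx) :
    ContinuousOn (fun q => waveSpeed K γ (W q)) (slab b) := fun q hq =>
  (hasDerivAt_waveSpeed (h.pos q hq)).continuousAt.comp_continuousWithinAt (h.continuousOn_W q hq)

lemma continuousOn_etaFun (hγ : 1 < γ) (h : IsSlabSolution K γ b U W Ux Wx) :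
    ContinuousOn (fun q => etaFun K γ (W q)) (slab b) := fun q hq =>
  (hasDerivAt_etaFun hγ (h.pos q hq)).continuousAt.comp_continuousWithinAt (h.continuousOn_W q hq)

lemma pos_of_mem_Ioo (h : IsSlabSolution K γ b U W Ux Wx) {p : ℝ × ℝ} (hp : p.2 ∈ Ioo 0 b) :
    0 < W p :=
  h.pos p (mem_of_mem_nhds (slab_mem_nhds hp))

/-- The Riemann invariant `s` is constant along forward characteristics. -/
lemma deriv_add_eta (hγ : 1 < γ) (h : IsSlabSolution K γ b U W Ux Wx) {p : ℝ × ℝ}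
    (hp : p.2 ∈ Ioo 0 b) :
    HasLineDerivAt ℝ (fun q => U q + etaFun K γ (W q)) 0 p (waveSpeed K γ (W p), 1) := by
  have h1 := (h.deriv_U p hp (waveSpeed K γ (W p))).add_real
    ((hasDerivAt_etaFun (K := K) hγ (h.pos_of_mem_Ioo hp)).comp_hasLineDerivAt (h.deriv_W p hp _))
  convert h1 using 1
  ring

/-- The Riemann invariant `r` is constant along backward characteristics. -/
lemma deriv_eta_sub (hγ : 1 < γ) (h : IsSlabSolution K γ b U W Ux Wx) {p : ℝ × ℝ}
    (hp : p.2 ∈ Ioo 0 b) :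
    HasLineDerivAt ℝ (fun q => etaFun K γ (W q) - U q) 0 p (-waveSpeed K γ (W p), 1) := by
  have h1 := ((hasDerivAt_etaFun (K := K) hγ (h.pos_of_mem_Ioo hp)).comp_hasLineDerivAt
    (h.deriv_W p hp (-waveSpeed K γ (W p)))).sub_real (h.deriv_U p hp _)
  convert h1 using 1
  ring

/-- The Riccati type equation for `α` along forward characteristics. -/
lemma deriv_alpha (h : IsSlabSolution K γ b U W Ux Wx) {p : ℝ × ℝ} (hp : p.2 ∈ Ioo 0 b) :
    HasLineDerivAt ℝ (fun q => Ux q - waveSpeed K γ (W q) * Wx q)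
      ((Ux p - waveSpeed K γ (W p) * Wx p) *
        ((γ + 1) / (2 * W p) * (waveSpeed K γ (W p) * Wx p))) p (waveSpeed K γ (W p), 1) := by
  obtain ⟨Uxx, Wxx, h2⟩ := h.deriv_grad p hp
  have hW := h.pos_of_mem_Ioo hp
  have hc := (hasDerivAt_waveSpeed (K := K) (γ := γ) hW).comp_hasLineDerivAt
    (h.deriv_W p hp (waveSpeed K γ (W p)))
  have h1 := (h2 (waveSpeed K γ (W p))).1.sub_real
    (hc.mul_real (h2 (waveSpeed K γ (W p))).2)
  convert h1 using 1
  field_simp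
  ring

/-- The Riccati type equation for `β` along backward characteristics. -/
lemma deriv_beta (h : IsSlabSolution K γ b U W Ux Wx) {p : ℝ × ℝ} (hp : p.2 ∈ Ioo 0 b) :
    HasLineDerivAt ℝ (fun q => Ux q + waveSpeed K γ (W q) * Wx q)
      ((Ux p + waveSpeed K γ (W p) * Wx p) *
        -((γ + 1) / (2 * W p) * (waveSpeed K γ (W p) * Wx p))) p (-waveSpeed K γ (W p), 1) := by
  obtain ⟨Uxx, Wxx, h2⟩ := h.deriv_grad p hp
  have hW := h.pos_of_mem_Ioo hp
  have hc := (hasDerivAt_waveSpeed (K := K) (γ := γ) hW).comp_hasLineDerivAt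
    (h.deriv_W p hp (-waveSpeed K γ (W p)))
  have h1 := (h2 (-waveSpeed K γ (W p))).1.add_real
    (hc.mul_real (h2 (-waveSpeed K γ (W p))).2)
  convert h1 using 1
  field_simp
  ring

/-- Bounds on the initial Riemann invariants give a speed `L` that is not exceeded in the
corresponding backward triangle. -/
lemma exists_waveSpeed_le (hK : 0 < K) (hγ : 1 < γ) (h : IsSlabSolution K γ b U W Ux Wx)
    {B : ℝ} (hB : ∀ x, |U (x, 0)| + etaFun K γ (W (x, 0)) ≤ B) (x₀ : ℝ) {t₁ : ℝ} (hb : t₁ < b) :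
    ∃ L, 0 ≤ L ∧ ∀ p ∈ backwardTriangle x₀ t₁ L, waveSpeed K γ (W p) ≤ L := by
  set L := |Real.sqrt (K * γ) *
      ((B + 1 + t₁) / (2 * Real.sqrt (K * γ) / (γ - 1))) ^ ((γ + 1) / (γ - 1))| with hLdef
  have hL : 0 ≤ L := abs_nonneg _
  have hsub := backwardTriangle_subset_slab (x₀ := x₀) (L := L) hb
  have hspeed : ∀ p ∈ backwardTriangle x₀ t₁ L, etaFun K γ (W p) ≤ B + 1 + t₁ →
      waveSpeed K γ (W p) ≤ L := fun p hp hη =>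
    (waveSpeed_le_of_etaFun_le hK hγ (h.pos p (hsub hp)) hη).trans (le_abs_self _)
  refine ⟨L, hL, fun p hp => hspeed p hp ?_⟩
  have hlin : ∀ p : ℝ × ℝ, HasDerivAt (fun t : ℝ => B + 1 + t) 1 p.2 :=
    fun p => (hasDerivAt_id p.2).const_add (B + 1)
  have hlinc : ContinuousOn (fun q : ℝ × ℝ => B + 1 + q.2) (slab b) := by fun_prop
  have key := neg_on_backwardTriangle (x₀ := x₀) (t₁ := t₁) hL
    (f := fun q => U q + etaFun K γ (W q) - (B + 1 + q.2))
    (g := fun q => etaFun K γ (W q) - U q - (B + 1 + q.2))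
    (((h.continuousOn_U.add (h.continuousOn_etaFun hγ)).sub hlinc).mono hsub)
    ((((h.continuousOn_etaFun hγ).sub h.continuousOn_U).sub hlinc).mono hsub)
    ?_ ?_ ?_ p hp
  · linarith [key.1, key.2, hp.2.1]
  · rintro ⟨x, t⟩ hq (rfl : t = 0)
    have := hB x
    have h1 := abs_le.mp (le_refl |U (x, 0)|)
    constructor <;> simp only <;> linarith
  · intro q hq hq0 hfq hgq
    have hq' : q.2 ∈ Ioo 0 b := ⟨hq0, hq.2.1.trans_lt hb⟩
    refine ⟨waveSpeed K γ (W q), 0 - 1, ?_, by norm_num,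
      (h.deriv_add_eta hγ hq').sub_real (hlin q).hasLineDerivAt_snd⟩
    rw [abs_of_pos (waveSpeed_pos hK hγ (h.pos_of_mem_Ioo hq'))]
    exact hspeed q hq (by linarith [hq.2.1])
  · intro q hq hq0 hfq hgq
    have hq' : q.2 ∈ Ioo 0 b := ⟨hq0, hq.2.1.trans_lt hb⟩
    refine ⟨-waveSpeed K γ (W q), 0 - 1, ?_, by norm_num,
      (h.deriv_eta_sub hγ hq').sub_real (hlin q).hasLineDerivAt_snd⟩
    rw [abs_neg, abs_of_pos (waveSpeed_pos hK hγ (h.pos_of_mem_Ioo hq'))]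
    exact hspeed q hq (by linarith [hq.2.1])

/-- A strict nonnegative upper bound on the initial gradient variables persists. -/
lemma gradient_lt (hK : 0 < K) (hγ : 1 < γ) (h : IsSlabSolution K γ b U W Ux Wx)
    {B : ℝ} (hB : ∀ x, |U (x, 0)| + etaFun K γ (W (x, 0)) ≤ B) {M : ℝ} (hM : 0 ≤ M)
    (hM0 : ∀ x, Ux (x, 0) - waveSpeed K γ (W (x, 0)) * Wx (x, 0) < M ∧
      Ux (x, 0) + waveSpeed K γ (W (x, 0)) * Wx (x, 0) < M)
    {p : ℝ × ℝ} (hp : p.2 ∈ Ioo 0 b) :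
    Ux p - waveSpeed K γ (W p) * Wx p < M ∧ Ux p + waveSpeed K γ (W p) * Wx p < M := by
  obtain ⟨L, hL, hspeed⟩ := h.exists_waveSpeed_le hK hγ hB p.1 hp.2
  have hcomp := isCompact_backwardTriangle p.1 p.2 hL
  have hsub := backwardTriangle_subset_slab (x₀ := p.1) (L := L) hp.2
  set Δ := backwardTriangle p.1 p.2 L with hΔ
  have hcα : ContinuousOn (fun q => Ux q - waveSpeed K γ (W q) * Wx q) Δ :=
    (h.continuousOn_Ux.sub (h.continuousOn_waveSpeed.mul h.continuousOn_Wx)).mono hsub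
  have hcβ : ContinuousOn (fun q => Ux q + waveSpeed K γ (W q) * Wx q) Δ :=
    (h.continuousOn_Ux.add (h.continuousOn_waveSpeed.mul h.continuousOn_Wx)).mono hsub
  have hck : ContinuousOn
      (fun q => (γ + 1) / (2 * W q) * (waveSpeed K γ (W q) * Wx q)) Δ :=
    ((continuousOn_const.div (continuousOn_const.mul h.continuousOn_W) fun q hq =>
      (mul_pos two_pos (h.pos q hq)).ne').mul
      (h.continuousOn_waveSpeed.mul h.continuousOn_Wx)).mono hsub
  obtain ⟨N, hN⟩ := hcomp.exists_bound_of_continuousOn hck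
  have hpΔ : p ∈ Δ := ⟨hp.1.le, le_rfl, by simp⟩
  obtain ⟨δ, hδ, hbase⟩ : ∃ δ > 0, ∀ q ∈ Δ, q.2 = 0 →
      Ux q - waveSpeed K γ (W q) * Wx q < M - δ ∧ Ux q + waveSpeed K γ (W q) * Wx q < M - δ := by
    have hbc : IsCompact (Δ ∩ {q | q.2 = 0}) :=
      hcomp.inter_right (isClosed_eq continuous_snd continuous_const)
    have hne : (Δ ∩ {q | q.2 = 0}).Nonempty :=
      ⟨(p.1, 0), ⟨le_rfl, hp.1.le, by simpa using mul_nonneg hL hp.1.le⟩, rfl⟩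
    obtain ⟨⟨x, t⟩, ⟨-, (rfl : t = 0)⟩, hmax⟩ := hbc.exists_isMaxOn hne
      ((ContinuousOn.sup hcα hcβ).mono inter_subset_left)
    have hlt := max_lt (hM0 x).1 (hM0 x).2
    refine ⟨(M - max (Ux (x, 0) - waveSpeed K γ (W (x, 0)) * Wx (x, 0))
      (Ux (x, 0) + waveSpeed K γ (W (x, 0)) * Wx (x, 0))) / 2, by linarith, fun q hq hq0 => ?_⟩
    rw [← max_lt_iff]
    have := isMaxOn_iff.mp hmax q ⟨hq, hq0⟩
    exact lt_of_le_of_lt this (by linarith)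
  set m : ℝ → ℝ := fun t => M - δ * Real.exp (-(N + 1) * t) with hm
  have hmd : ∀ t, HasDerivAt m ((N + 1) * (δ * Real.exp (-(N + 1) * t))) t := by
    intro t
    have h1 := ((((hasDerivAt_id t).const_mul (-(N + 1))).exp).const_mul δ).const_sub M
    refine h1.congr_deriv ?_
    simp only [id]
    ring
  have hmc : ContinuousOn (fun q : ℝ × ℝ => m q.2) Δ := by
    simp only [hm]; fun_prop
  have hneg : ∀ t z, |z| ≤ N → z ≤ 0 →
      m t * z - (N + 1) * (δ * Real.exp (-(N + 1) * t)) < 0 := by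
    intro t z hz hz0
    have he : 0 < δ * Real.exp (-(N + 1) * t) := by positivity
    have h1 := (abs_le.mp hz).1
    simp only [hm]
    nlinarith [mul_nonneg hM (neg_nonneg.mpr hz0)]
  have key := neg_on_backwardTriangle (x₀ := p.1) (t₁ := p.2) hL
    (f := fun q => Ux q - waveSpeed K γ (W q) * Wx q - m q.2)
    (g := fun q => Ux q + waveSpeed K γ (W q) * Wx q - m q.2)
    (hcα.sub hmc) (hcβ.sub hmc) ?_ ?_ ?_ p hpΔ
  · have he : 0 < δ * Real.exp (-(N + 1) * p.2) := by positivity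
    simp only [hm] at key
    exact ⟨by linarith [key.1], by linarith [key.2]⟩
  · intro q hq hq0
    have h1 := hbase q hq hq0
    have h2 : m q.2 = M - δ := by simp [hm, hq0]
    simp only [h2]
    exact ⟨by linarith [h1.1], by linarith [h1.2]⟩
  · intro q hq hq0 hfq hgq
    have hq' : q.2 ∈ Ioo 0 b := ⟨hq0, hq.2.1.trans_lt hp.2⟩
    have hWq := h.pos_of_mem_Ioo hq'
    refine ⟨waveSpeed K γ (W q), _, ?_, ?_,
      (h.deriv_alpha hq').sub_real (hmd q.2).hasLineDerivAt_snd⟩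
    · rw [abs_of_pos (waveSpeed_pos hK hγ hWq)]
      exact hspeed q hq
    · rw [sub_eq_zero.mp hfq]
      exact hneg _ _ (hN q hq)
        (mul_nonpos_of_nonneg_of_nonpos (by positivity) (by linarith))
  · intro q hq hq0 hgq hfq
    have hq' : q.2 ∈ Ioo 0 b := ⟨hq0, hq.2.1.trans_lt hp.2⟩
    have hWq := h.pos_of_mem_Ioo hq'
    refine ⟨-waveSpeed K γ (W q), _, ?_, ?_,
      (h.deriv_beta hq').sub_real (hmd q.2).hasLineDerivAt_snd⟩
    · rw [abs_neg, abs_of_pos (waveSpeed_pos hK hγ hWq)]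
      exact hspeed q hq
    · rw [sub_eq_zero.mp hgq]
      exact hneg _ _ ((abs_neg _).trans_le (hN q hq))
        (neg_nonpos.mpr (mul_nonneg (by positivity) (by linarith)))

end IsSlabSolution

/-- A bounded differentiable function on the line cannot have derivative below a negative
constant. -/
lemma nonneg_of_deriv_lt_of_bounded {f : ℝ → ℝ} (hf : Differentiable ℝ f) {C M : ℝ}
    (hC : ∀ x, |f x| ≤ C) (hM : ∀ x, deriv f x < M) : 0 ≤ M := by
  by_contra! hneg
  have hC0 : 0 ≤ C := (abs_nonneg _).trans (hC 0)
  have hx : 0 ≤ (2 * C + 1) / -M := div_nonneg (by linarith) (by linarith)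
  have h1 := image_sub_le_mul_sub_of_deriv_le hf (fun x => (hM x).le) hx
  have h2 : M * ((2 * C + 1) / -M - 0) = -(2 * C + 1) := by
    field_simp [hneg.ne]
    ring
  rw [h2] at h1
  linarith [(abs_le.mp (hC 0)).2, (abs_le.mp (hC ((2 * C + 1) / -M))).1]

/-- upper bound on `τ_t = u_x = (α+β)/2` for the p-system. -/
theorem psystem_ux_upper_bound
    (K γ : ℝ) (hK : 0 < K) (hγ : 1 < γ)
    (T : EReal) (hT : 0 < T)
    (u τ : ℝ → ℝ → ℝ)
    (hu_reg : ContDiffOn ℝ 2 (fun p : ℝ × ℝ => u p.1 p.2) (strip T))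
    (hτ_reg : ContDiffOn ℝ 2 (fun p : ℝ × ℝ => τ p.1 p.2) (strip T))
    (hτ_pos : ∀ x t : ℝ, 0 ≤ t → (t : EReal) < T → 0 < τ x t)
    (hpde : ∀ x t : ℝ, 0 ≤ t → (t : EReal) < T → pSystem K γ u τ x t)
    (hbdd : ∃ C : ℝ, ∀ x : ℝ, |u x 0| ≤ C ∧ τ x 0 ≤ C ∧ 1 / τ x 0 ≤ C ∧
      |alphaP K γ u τ x 0| ≤ C ∧ |betaP K γ u τ x 0| ≤ C)
    (M : ℝ)
    (hM0 : ∀ x : ℝ, alphaP K γ u τ x 0 < M ∧ betaP K γ u τ x 0 < M) :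
    ∀ x t : ℝ, 0 ≤ t → (t : EReal) < T →
      pdt τ x t = pdx u x t ∧
      pdx u x t = (alphaP K γ u τ x t + betaP K γ u τ x t) / 2 ∧
      pdx u x t < M := by
  intro x t ht0 htT
  have hsum : pdx u x t = (alphaP K γ u τ x t + betaP K γ u τ x t) / 2 := by
    simp only [alphaP, betaP]; ring
  refine ⟨sub_eq_zero.mp (hpde x t ht0 htT).1, hsum, ?_⟩
  obtain ⟨b, htb, hbT⟩ := EReal.lt_iff_exists_real_btwn.mp htT
  have htb' : t < b := EReal.coe_lt_coe_iff.mp htb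
  have hslab : ∀ p ∈ slab b, 0 ≤ p.2 ∧ (p.2 : EReal) < T := fun p hp =>
    ⟨hp.2.1, (EReal.coe_lt_coe_iff.mpr hp.2.2).trans hbT⟩
  have hu := hu_reg.mono hslab
  have hτ := hτ_reg.mono hslab
  have hpos : ∀ p ∈ slab b, 0 < τ p.1 p.2 := fun p hp =>
    hτ_pos _ _ (hslab p hp).1 (hslab p hp).2
  have hsol := isSlabSolution_of_contDiffOn hK hγ hu hτ hpos fun p hp =>
    hpde _ _ (hslab p hp).1 (hslab p hp).2
  have hzero : ∀ y : ℝ, ((y, 0) : ℝ × ℝ) ∈ slab b := fun y =>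
    ⟨mem_univ _, le_rfl, ht0.trans_lt htb'⟩
  have hηx : ∀ p ∈ slab b, pdx (etaP K γ τ) p.1 p.2 =
      -(waveSpeed K γ (τ p.1 p.2) * pdx τ p.1 p.2) := by
    intro p hp
    have h1 := hasDerivAt_fst_of_slab hτ hp
    have h2 : pdx τ p.1 p.2 = _ := h1.deriv
    have h3 : pdx (etaP K γ τ) p.1 p.2 = _ :=
      (HasDerivAt.comp (h₂ := etaFun K γ) p.1 (hasDerivAt_etaFun hγ (hpos p hp)) h1).deriv
    rw [h3, h2]
    ring
  obtain ⟨C, hC⟩ := hbdd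
  have hM : 0 ≤ M := by
    refine nonneg_of_deriv_lt_of_bounded (f := fun y => u y 0)
      (fun y => (hasDerivAt_fst_of_slab hu (hzero y)).differentiableAt)
      (fun y => (hC y).1) fun y => ?_
    have h1 := hM0 y
    have h2 : deriv (fun y => u y 0) y = (alphaP K γ u τ y 0 + betaP K γ u τ y 0) / 2 := by
      simp only [alphaP, betaP, pdx]; ring
    rw [h2]
    linarith [h1.1, h1.2]
  rcases ht0.eq_or_lt with rfl | ht
  · rw [hsum]
    linarith [(hM0 x).1, (hM0 x).2]
  have hgrad := hsol.gradient_lt hK hγ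
    (B := C + 2 * Real.sqrt (K * γ) / (γ - 1) * C ^ ((γ - 1) / 2))
    (fun y => add_le_add (hC y).1 (etaFun_le_of_inv_le hγ (hpos _ (hzero y)) (hC y).2.2.1))
    hM (fun y => ?_) (p := (x, t)) ⟨ht, htb'⟩
  · simp only at hgrad
    linarith [hgrad.1, hgrad.2]
  · have h1 := hM0 y
    simp only [alphaP, betaP, hηx (y, 0) (hzero y)] at h1
    exact ⟨by linarith [h1.1], by linarith [h1.2]⟩
end
end
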